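/- arXiv:2411.00817 — 2 statements merged into one kernel-verified Lean document; each statement's English description precedes it below -/
import Mathlib

section
/- Let n ≥ 2, let Ω, Ω̃ ⊆ ℝⁿ be bounded, uniformly convex open domains with smooth boundary with defining functions h̃ and h respectively, and suppose the closure of Ω̃ is contained in the open unit ball B₁(0). Then there exists a constant C₁ > 0, depending only on Ω and Ω̃ (i.e., on the defining functions and their convexity constants), such that for every strictly convex solution (u, c) of the second boundary value problem for the Lorentz mean curvature operator on (Ω, Ω̃) and every x ∈ ∂Ω, ⟨∇h(∇u(x)), ∇h̃(x)⟩ ≥ 1/C₁ > 0 (the strict obliqueness estimate). -/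
noncomputable section
open MeasureTheory
open scoped RealInnerProductSpace

/-- The `i`-th standard basis vector of `ℝⁿ`. -/
def ev (n : ℕ) (i : Fin n) : EuclideanSpace ℝ (Fin n) := EuclideanSpace.single i 1

/-- Lorentz mean curvature operator `M[u] x = ∑ i, ∂ᵢ (∂ᵢ u / √(1 - |∇u|²)) x`. -/
def MOp (n : ℕ) (u : EuclideanSpace ℝ (Fin n) → ℝ) (x : EuclideanSpace ℝ (Fin n)) : ℝ :=
  ∑ i : Fin n,
    fderiv ℝ (fun y => fderiv ℝ u y (ev n i) / Real.sqrt (1 - ‖gradient u y‖ ^ 2)) x (ev n i)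

/-- Euclidean mean curvature operator `E[u] x = ∑ i, ∂ᵢ (∂ᵢ u / √(1 + |∇u|²)) x`. -/
def EOp (n : ℕ) (u : EuclideanSpace ℝ (Fin n) → ℝ) (x : EuclideanSpace ℝ (Fin n)) : ℝ :=
  ∑ i : Fin n,
    fderiv ℝ (fun y => fderiv ℝ u y (ev n i) / Real.sqrt (1 + ‖gradient u y‖ ^ 2)) x (ev n i)

/-- `Ω` is a uniformly convex domain with smooth boundary, exhibited by the defining
function `h` with uniform concavity constant `θ`:  `h` is smooth, `Ω = {h > 0}`,
`|∇h| = 1` on `∂Ω`, and `⟨ξ, D²h(p) ξ⟩ ≤ -θ |ξ|²` for all `p, ξ`. -/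
def IsUnifConvexDefFn (n : ℕ) (Ω : Set (EuclideanSpace ℝ (Fin n)))
    (h : EuclideanSpace ℝ (Fin n) → ℝ) (θ : ℝ) : Prop :=
  ContDiff ℝ (⊤ : ℕ∞) h ∧ Ω = {p | 0 < h p} ∧
  (∀ p ∈ frontier Ω, ‖gradient h p‖ = 1) ∧ 0 < θ ∧
  ∀ p ξ : EuclideanSpace ℝ (Fin n), ⟪ξ, fderiv ℝ (gradient h) p ξ⟫ ≤ -θ * ‖ξ‖ ^ 2

/-- `u` is smooth on the closure of `Ω` (i.e. on an open neighbourhood of it). -/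
def SmoothOnClosure (n : ℕ) (Ω : Set (EuclideanSpace ℝ (Fin n)))
    (u : EuclideanSpace ℝ (Fin n) → ℝ) : Prop :=
  ∃ U : Set (EuclideanSpace ℝ (Fin n)), IsOpen U ∧ closure Ω ⊆ U ∧ ContDiffOn ℝ (⊤ : ℕ∞) u U

/-- `(u, c)` is a strictly convex solution of the second boundary value problem for the
Lorentz mean curvature operator on `(Ω, Ω')`: `u` is smooth up to the boundary, spacelike
(`|∇u| < 1`), has positive definite Hessian `D²u` on the closure of `Ω`, its gradient map
is a bijection from `Ω` onto `Ω'`, and `M[u] = c` on `Ω`. -/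
def IsSol (n : ℕ) (Ω Ω' : Set (EuclideanSpace ℝ (Fin n)))
    (u : EuclideanSpace ℝ (Fin n) → ℝ) (c : ℝ) : Prop :=
  SmoothOnClosure n Ω u ∧
  (∀ x ∈ closure Ω, ‖gradient u x‖ < 1) ∧
  (∀ x ∈ closure Ω, ∀ ξ : EuclideanSpace ℝ (Fin n), ξ ≠ 0 →
      0 < ⟪ξ, fderiv ℝ (gradient u) x ξ⟫) ∧
  Set.BijOn (gradient u) Ω Ω' ∧
  (∀ x ∈ Ω, MOp n u x = c)

/-- `(u, c)` is a strictly convex solution of the second boundary value problem for the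
Euclidean mean curvature operator on `(Ω, Ω')`. -/
def IsSolE (n : ℕ) (Ω Ω' : Set (EuclideanSpace ℝ (Fin n)))
    (u : EuclideanSpace ℝ (Fin n) → ℝ) (c : ℝ) : Prop :=
  SmoothOnClosure n Ω u ∧
  (∀ x ∈ closure Ω, ∀ ξ : EuclideanSpace ℝ (Fin n), ξ ≠ 0 →
      0 < ⟪ξ, fderiv ℝ (gradient u) x ξ⟫) ∧
  Set.BijOn (gradient u) Ω Ω' ∧
  (∀ x ∈ Ω, EOp n u x = c)

/-- `ut` is the Legendre transform of `u`: it is smooth up to the boundary of `Ω'`,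
satisfies `ut (∇u x) = ⟨x, ∇u x⟩ - u x` and `∇ut (∇u x) = x` for `x ∈ Ω`. -/
def IsLegendre (n : ℕ) (Ω Ω' : Set (EuclideanSpace ℝ (Fin n)))
    (u ut : EuclideanSpace ℝ (Fin n) → ℝ) : Prop :=
  SmoothOnClosure n Ω' ut ∧
  (∀ x ∈ Ω, ut (gradient u x) = ⟪x, gradient u x⟫ - u x) ∧
  (∀ x ∈ Ω, gradient ut (gradient u x) = x)

/-- The coefficient matrix `s_ij(p) = (δ_ij + pᵢpⱼ/(1 - |p|²)) / √(1 - |p|²)` of the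
Lorentz mean curvature operator written in nondivergence form. -/
def sMat (n : ℕ) (p : EuclideanSpace ℝ (Fin n)) (i j : Fin n) : ℝ :=
  ((if i = j then (1 : ℝ) else 0) + p i * p j / (1 - ‖p‖ ^ 2)) / Real.sqrt (1 - ‖p‖ ^ 2)

/-- `Ω` has smooth boundary: it is the superlevel set of a smooth function whose
gradient does not vanish on the boundary. -/
def HasSmoothBoundary (n : ℕ) (Ω : Set (EuclideanSpace ℝ (Fin n))) : Prop :=
  ∃ g : EuclideanSpace ℝ (Fin n) → ℝ, ContDiff ℝ (⊤ : ℕ∞) g ∧ Ω = {p | 0 < g p} ∧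
    ∀ p ∈ frontier Ω, gradient g p ≠ 0

/-- `B(p) = Iₙ + p pᵀ / (v (1 + v))`, `v = √(1 - |p|²)`: the positive square root of the
inverse induced metric of a spacelike graph with gradient `p`. -/
def sqB (n : ℕ) (p : EuclideanSpace ℝ (Fin n)) : Matrix (Fin n) (Fin n) ℝ :=
  1 + (Real.sqrt (1 - ‖p‖ ^ 2) * (1 + Real.sqrt (1 - ‖p‖ ^ 2)))⁻¹ •
      Matrix.of fun i j => p i * p j

/-- `B'(p) = Iₙ - p pᵀ / (1 + v)`, `v = √(1 - |p|²)`: the square root of the induced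
metric of a spacelike graph with gradient `p`. -/
def sqBinv (n : ℕ) (p : EuclideanSpace ℝ (Fin n)) : Matrix (Fin n) (Fin n) ℝ :=
  1 - (1 + Real.sqrt (1 - ‖p‖ ^ 2))⁻¹ • Matrix.of fun i j => p i * p j

section generic
set_option linter.unusedSectionVars false
variable {E : Type*} [NormedAddCommGroup E] [InnerProductSpace ℝ E] [CompleteSpace E]

lemma aux_grad_fderiv {f : E → ℝ} {v x : E} (hf : HasGradientAt f v x) :
    HasFDerivAt f (innerSL ℝ v) x := hf.hasFDerivAt

lemma aux_of_fderiv {f : E → ℝ} {v x : E} {L : E →L[ℝ] ℝ} (hf : HasFDerivAt f L x)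
    (hL : ∀ e, L e = ⟪v, e⟫) : HasGradientAt f v x := by
  rw [hasGradientAt_iff_hasFDerivAt]
  have : InnerProductSpace.toDual ℝ E v = L := by
    ext e
    rw [hL e]; rfl
  rw [this]; exact hf

lemma aux_line (x e : E) (t : ℝ) : HasDerivAt (fun t : ℝ => x + t • e) e t := by
  simpa using ((hasDerivAt_id t).smul_const e).const_add x

lemma aux_grad_line {f : E → ℝ} {v x e : E} {t : ℝ} (hf : HasGradientAt f v (x + t • e)) :
    HasDerivAt (fun t : ℝ => f (x + t • e)) ⟪v, e⟫ t := by
  exact (aux_grad_fderiv hf).comp_hasDerivAt t (aux_line x e t)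

lemma aux_fd_line {F : Type*} [NormedAddCommGroup F] [NormedSpace ℝ F]
    {f : E → F} {L : E →L[ℝ] F} {x e : E} {t : ℝ} (hf : HasFDerivAt f L (x + t • e)) :
    HasDerivAt (fun t : ℝ => f (x + t • e)) (L e) t :=
  hf.comp_hasDerivAt t (aux_line x e t)

/-- second order necessary condition -/
lemma aux_sot {f : E → ℝ} {F : E → E} {F' : E →L[ℝ] E} {x : E}
    (hF : ∀ᶠ y in nhds x, HasGradientAt f (F y) y) (hF' : HasFDerivAt F F' x)
    (hmin : IsLocalMin f x) : F x = 0 ∧ ∀ e, 0 ≤ ⟪e, F' e⟫ := by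
  have h0 : F x = 0 := by
    have h1 := aux_grad_fderiv hF.self_of_nhds
    have h2 := hmin.hasFDerivAt_eq_zero h1
    have h3 : ⟪F x, F x⟫ = 0 := by
      have := congrArg (fun L : E →L[ℝ] ℝ => L (F x)) h2
      simpa using this
    exact inner_self_eq_zero.mp h3
  refine ⟨h0, fun e => ?_⟩
  by_contra hneg
  push Not at hneg
  set p : ℝ → ℝ := fun t => f (x + t • e) with hp
  have hcont : ContinuousAt (fun t : ℝ => x + t • e) 0 := (aux_line x e 0).continuousAt
  have htend : Filter.Tendsto (fun t : ℝ => x + t • e) (nhds 0) (nhds x) := by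
    have := hcont.tendsto
    simpa using this
  have hd : ∀ᶠ t in nhds (0:ℝ), HasDerivAt p ⟪F (x + t • e), e⟫ t := by
    filter_upwards [htend.eventually hF] with t ht
    exact aux_grad_line ht
  have hde : deriv p =ᶠ[nhds 0] fun t => ⟪F (x + t • e), e⟫ := by
    filter_upwards [hd] with t ht using ht.deriv
  have hdd : HasDerivAt (fun t : ℝ => ⟪F (x + t • e), e⟫) ⟪F' e, e⟫ 0 := by
    have h1 : HasFDerivAt F F' (x + (0:ℝ) • e) := by simpa using hF'
    have := (aux_fd_line h1).inner ℝ (hasDerivAt_const (0:ℝ) e)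
    simpa using this
  have hdd' : deriv (deriv p) 0 = ⟪F' e, e⟫ := by
    rw [hde.deriv_eq, hdd.deriv]
  have hd0 : deriv p 0 = 0 := by
    rw [hde.self_of_nhds]; simp [h0]
  have hpmin : IsLocalMin p 0 := by
    have := htend.eventually hmin
    filter_upwards [this] with t ht
    simpa [hp] using ht
  have hpmax : IsLocalMax p 0 := by
    apply isLocalMax_of_deriv_deriv_neg _ hd0 hd.self_of_nhds.continuousAt
    rw [hdd', real_inner_comm]; exact hneg
  have hconst : p =ᶠ[nhds 0] fun _ => p 0 := by
    filter_upwards [hpmin, hpmax] with t h1 h2 using le_antisymm h2 h1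
  have : deriv (deriv p) 0 = 0 := by
    have h1 : deriv p =ᶠ[nhds 0] deriv (fun _ => p 0) := hconst.deriv
    rw [h1.deriv_eq]; simp
  rw [hdd', real_inner_comm] at this
  linarith

/-- uniform concavity inequality -/
lemma aux_conc {h : E → ℝ} {θ : ℝ} (hh : ContDiff ℝ (⊤ : ℕ∞) h)
    (hG : ContDiff ℝ (⊤ : ℕ∞) (gradient h))
    (hθ : ∀ p ξ : E, ⟪ξ, fderiv ℝ (gradient h) p ξ⟫ ≤ -θ * ‖ξ‖ ^ 2) (p q : E) :
    h q ≤ h p + ⟪gradient h p, q - p⟫ - θ / 2 * ‖q - p‖ ^ 2 := by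
  set d := q - p with hd
  have hg : ∀ y, HasGradientAt h (gradient h y) y := fun y =>
    (hh.differentiable (by simp) y).hasGradientAt
  have hG' : ∀ y, HasFDerivAt (gradient h) (fderiv ℝ (gradient h) y) y := fun y =>
    (hG.differentiable (by simp) y).hasFDerivAt
  set f1 : ℝ → ℝ := fun t => ⟪gradient h (p + t • d), d⟫ - ⟪gradient h p, d⟫ + θ * t * ‖d‖ ^ 2
  have e1 : ∀ t, HasDerivAt f1 (⟪fderiv ℝ (gradient h) (p + t • d) d, d⟫ + θ * ‖d‖^2) t := by
    intro t
    have h1 := (aux_fd_line (hG' (p + t • d))).inner ℝ (hasDerivAt_const t d)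
    have h2 := (h1.sub_const ⟪gradient h p, d⟫).add
      (((hasDerivAt_id t).const_mul θ).mul_const (‖d‖^2))
    refine HasDerivAt.congr_deriv (f := f1) h2 ?_
    simp
  have a1 : Antitone f1 := by
    apply antitone_of_deriv_nonpos (fun t => (e1 t).differentiableAt)
    intro t
    rw [(e1 t).deriv, real_inner_comm]
    have := hθ (p + t • d) d
    linarith
  set f0 : ℝ → ℝ := fun t => h (p + t • d) - t * ⟪gradient h p, d⟫ + θ / 2 * t ^ 2 * ‖d‖ ^ 2
  have e0 : ∀ t, HasDerivAt f0 (f1 t) t := by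
    intro t
    have h1 := (aux_grad_line (hg (p + t • d)))
    have h2 := (h1.sub ((hasDerivAt_id t).mul_const ⟪gradient h p, d⟫)).add
      (((hasDerivAt_pow 2 t).const_mul (θ/2)).mul_const (‖d‖^2))
    refine HasDerivAt.congr_deriv (f := f0) h2 ?_
    simp only [f1]
    push_cast; ring
  have a0 : AntitoneOn f0 (Set.Ici 0) := by
    apply antitoneOn_of_deriv_nonpos (convex_Ici 0)
    · exact fun t _ => (e0 t).continuousAt.continuousWithinAt
    · exact fun t _ => (e0 t).differentiableAt.differentiableWithinAt
    · intro t ht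
      rw [(e0 t).deriv]
      have ht' : 0 ≤ t := by
        rw [interior_Ici] at ht; exact le_of_lt ht
      have := a1 ht'
      simpa [f1] using this
  have := a0 (show (0:ℝ) ∈ Set.Ici 0 by simp) (show (1:ℝ) ∈ Set.Ici 0 by simp) zero_le_one
  simp only [f0, one_smul, zero_smul] at this
  have hq : p + d = q := by simp [hd]
  rw [hq] at this
  simp only [zero_mul, mul_zero, one_mul, one_pow, add_zero, sub_zero, mul_one, ne_eq,
    OfNat.ofNat_ne_zero, not_false_eq_true, zero_pow] at this
  linarith

lemma aux_convex {h : E → ℝ} {θ : ℝ} (h0 : 0 < θ)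
    (hc : ∀ p q : E, h q ≤ h p + ⟪gradient h p, q - p⟫ - θ / 2 * ‖q - p‖ ^ 2) :
    Convex ℝ {p | 0 < h p} := by
  intro x hx y hy a b ha hb hab
  simp only [Set.mem_ofPred_eq] at *
  set p := a • x + b • y with hp
  have h1 := hc p x
  have h2 := hc p y
  have h3 : a * ⟪gradient h p, x - p⟫ + b * ⟪gradient h p, y - p⟫ = 0 := by
    rw [← real_inner_smul_right, ← real_inner_smul_right, ← inner_add_right]
    have : a • (x - p) + b • (y - p) = 0 := by
      rw [smul_sub, smul_sub]
      have : a • p + b • p = p := by rw [← add_smul, hab, one_smul]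
      calc _ = (a • x + b • y) - (a • p + b • p) := by abel
        _ = 0 := by rw [this, hp]; simp
    rw [this, inner_zero_right]
  have h4 : 0 ≤ θ / 2 * ‖x - p‖ ^ 2 := by positivity
  have h5 : 0 ≤ θ / 2 * ‖y - p‖ ^ 2 := by positivity
  have h6 : a * h x + b * h y ≤ h p := by
    have i1 : a * h x ≤ a * (h p + ⟪gradient h p, x - p⟫) :=
      mul_le_mul_of_nonneg_left (by linarith) ha
    have i2 : b * h y ≤ b * (h p + ⟪gradient h p, y - p⟫) :=
      mul_le_mul_of_nonneg_left (by linarith) hb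
    have : a * h p + b * h p = h p := by rw [← add_mul, hab, one_mul]
    linarith
  have h7 : 0 < a * h x + b * h y := by
    rcases ha.eq_or_lt with h | h
    · have : b = 1 := by linarith
      subst this; rw [← h]; simpa using hy
    · have := mul_pos h hx
      have := mul_nonneg hb hy.le
      linarith
  linarith

lemma aux_contDiff_grad {u : E → ℝ} {U : Set E} (hU : IsOpen U)
    (hu : ContDiffOn ℝ (⊤ : ℕ∞) u U) : ContDiffOn ℝ (⊤ : ℕ∞) (gradient u) U := by
  have h1 : ContDiffOn ℝ (⊤ : ℕ∞) (fderiv ℝ u) U := hu.fderiv_of_isOpen hU (by simp)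
  exact (InnerProductSpace.toDual ℝ E).symm.contDiff.comp_contDiffOn h1

lemma aux_symm {u : E → ℝ} {U : Set E} (hU : IsOpen U)
    (hu : ContDiffOn ℝ (⊤ : ℕ∞) u U) {x : E} (hx : x ∈ U) (a b : E) :
    ⟪fderiv ℝ (gradient u) x a, b⟫ = ⟪fderiv ℝ (gradient u) x b, a⟫ := by
  have hG := aux_contDiff_grad hU hu
  have h1 : HasFDerivAt (gradient u) (fderiv ℝ (gradient u) x) x :=
    ((hG.contDiffAt (hU.mem_nhds hx)).differentiableAt (by simp)).hasFDerivAt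
  have hev : ∀ᶠ y in nhds x, HasFDerivAt u (innerSL ℝ (gradient u y)) y := by
    filter_upwards [hU.mem_nhds hx] with y hy
    exact aux_grad_fderiv
      ((hu.contDiffAt (hU.mem_nhds hy)).differentiableAt (by simp)).hasGradientAt
  have h2 := (innerSL ℝ (E := E)).hasFDerivAt.comp x h1
  have := second_derivative_symmetric_of_eventually hev h2 a b
  exact this

lemma aux_boundary {f g : E → ℝ} {a ν x : E} (hf : HasGradientAt f a x) (hg : HasGradientAt g ν x)
    (hf0 : f x = 0) (hg0 : g x = 0) (hν : ‖ν‖ = 1) (hpos : ∀ y, 0 < g y → 0 ≤ f y) :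
    ∃ l : ℝ, 0 ≤ l ∧ a = l • ν := by
  have key : ∀ ξ : E, 0 < ⟪ν, ξ⟫ → 0 ≤ ⟪a, ξ⟫ := by
    intro ξ hξ
    have hf1 : HasDerivAt (fun t : ℝ => f (x + t • ξ)) ⟪a, ξ⟫ 0 := aux_grad_line (by simpa using hf)
    have hg1 : HasDerivAt (fun t : ℝ => g (x + t • ξ)) ⟪ν, ξ⟫ 0 := aux_grad_line (by simpa using hg)
    have tf := hf1.tendsto_slope_zero_right
    have tg := hg1.tendsto_slope_zero_right
    simp only [zero_add, zero_smul, add_zero, hf0, hg0, sub_zero, smul_eq_mul] at tf tg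
    refine ge_of_tendsto tf ?_
    filter_upwards [tg.eventually (lt_mem_nhds hξ), self_mem_nhdsWithin] with t h1 h2
    have h2' : 0 < t := h2
    have h3 : 0 < t⁻¹ := inv_pos.mpr h2'
    have : 0 < g (x + t • ξ) := by
      by_contra hc
      push Not at hc
      have := mul_nonpos_of_nonneg_of_nonpos h3.le hc
      linarith
    exact mul_nonneg h3.le (hpos _ this)
  have hνν : ⟪ν, ν⟫ = 1 := by rw [real_inner_self_eq_norm_sq, hν]; norm_num
  set l := ⟪a, ν⟫ with hl
  refine ⟨l, key ν (by rw [hνν]; norm_num), ?_⟩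
  set b := a - l • ν with hb
  have hbν : ⟪ν, b⟫ = 0 := by
    rw [hb, inner_sub_right, inner_smul_right, hνν, real_inner_comm]; simp [hl]
  have hab : ⟪a, b⟫ = ‖b‖ ^ 2 := by
    have : a = b + l • ν := by rw [hb]; abel
    rw [← real_inner_self_eq_norm_sq]
    conv_lhs => rw [this]
    rw [inner_add_left, inner_smul_left, hbν]; simp
  have h1 : ∀ s : ℝ, 0 < s → ‖b‖ ^ 2 ≤ s * l := by
    intro s hs
    have := key (s • ν - b) (by
      rw [inner_sub_right, inner_smul_right, hνν, hbν]; simpa using hs)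
    rw [inner_sub_right, inner_smul_right, hab, ← hl] at this
    linarith
  have hl0 : 0 ≤ l := key ν (by rw [hνν]; norm_num)
  have h2 : ‖b‖ ^ 2 ≤ 0 := by
    by_contra hc
    push Not at hc
    have := h1 (‖b‖^2 / (2 * (l + 1))) (by positivity)
    rw [div_mul_eq_mul_div, le_div_iff₀ (by positivity)] at this
    nlinarith
  have h3 : b = 0 := by
    have : ‖b‖ = 0 := by nlinarith [norm_nonneg b]
    exact norm_eq_zero.mp this
  rw [hb] at h3
  exact sub_eq_zero.mp h3

lemma aux_cs {A : E →L[ℝ] E} (hs : ∀ a b, ⟪A a, b⟫ = ⟪A b, a⟫) (hp : ∀ a, 0 ≤ ⟪a, A a⟫) (a b : E) :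
    ⟪a, A b⟫ ^ 2 ≤ ⟪a, A a⟫ * ⟪b, A b⟫ := by
  have h : ∀ t : ℝ, 0 ≤ ⟪a, A a⟫ * (t * t) + (2 * ⟪a, A b⟫) * t + ⟪b, A b⟫ := by
    intro t
    have := hp (t • a + b)
    simp only [map_add, map_smul, inner_add_left, inner_add_right, inner_smul_left,
      inner_smul_right] at this
    have e : ⟪b, A a⟫ = ⟪a, A b⟫ := by rw [real_inner_comm, hs, real_inner_comm]
    rw [e] at this
    simp at this
    linarith
  have := discrim_le_zero h
  rw [discrim] at this
  nlinarith
end generic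
section eucl
variable {n : ℕ}

def trOp (A : EuclideanSpace ℝ (Fin n) →L[ℝ] EuclideanSpace ℝ (Fin n)) : ℝ :=
  ∑ i : Fin n, ⟪ev n i, A (ev n i)⟫

lemma aux_ev_norm (i : Fin n) : ‖ev n i‖ = 1 := by simp [ev]

lemma aux_ev_inner (i : Fin n) (w : EuclideanSpace ℝ (Fin n)) : ⟪ev n i, w⟫ = w i := by
  rw [ev, EuclideanSpace.inner_single_left]; simp

lemma aux_ev_sum (w : EuclideanSpace ℝ (Fin n)) : ∑ i, ⟪ev n i, w⟫ ^ 2 = ‖w‖ ^ 2 := by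
  rw [EuclideanSpace.norm_sq_eq]
  simp [aux_ev_inner]

lemma aux_ev_repr (w : EuclideanSpace ℝ (Fin n)) : ∑ i, ⟪ev n i, w⟫ • ev n i = w := by
  ext j
  simp only [aux_ev_inner]
  simp [ev, Finset.sum_apply, Pi.single_apply]

variable {A : EuclideanSpace ℝ (Fin n) →L[ℝ] EuclideanSpace ℝ (Fin n)}

lemma aux_tr_nonneg (hp : ∀ a, 0 ≤ ⟪a, A a⟫) : 0 ≤ trOp A :=
  Finset.sum_nonneg fun _ _ => hp _

lemma aux_tr1 (hs : ∀ a b, ⟪A a, b⟫ = ⟪A b, a⟫) (hp : ∀ a, 0 ≤ ⟪a, A a⟫)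
    (v : EuclideanSpace ℝ (Fin n)) : ‖A v‖ ^ 2 ≤ trOp A * ⟪v, A v⟫ := by
  rw [← aux_ev_sum, trOp, Finset.sum_mul]
  exact Finset.sum_le_sum fun i _ => aux_cs hs hp _ _

lemma aux_tr2 (hs : ∀ a b, ⟪A a, b⟫ = ⟪A b, a⟫) (hp : ∀ a, 0 ≤ ⟪a, A a⟫)
    (v : EuclideanSpace ℝ (Fin n)) : ‖A v‖ ≤ trOp A * ‖v‖ := by
  have h1 := aux_tr1 hs hp v
  have h2 := real_inner_le_norm v (A v)
  have h3 := aux_tr_nonneg hp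
  rcases (norm_nonneg (A v)).eq_or_lt with h | h
  · rw [← h]; positivity
  · have h4 : ‖A v‖ * ‖A v‖ ≤ (trOp A * ‖v‖) * ‖A v‖ := by
      have := mul_le_mul_of_nonneg_left h2 h3
      nlinarith
    exact le_of_mul_le_mul_right h4 h

lemma aux_tr3 (hs : ∀ a b, ⟪A a, b⟫ = ⟪A b, a⟫) (hp : ∀ a, 0 ≤ ⟪a, A a⟫)
    (v : EuclideanSpace ℝ (Fin n)) : ⟪v, A v⟫ ≤ trOp A * ‖v‖ ^ 2 := by
  have h1 := aux_tr2 hs hp v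
  have h2 := real_inner_le_norm v (A v)
  nlinarith [norm_nonneg v]

lemma aux_tr4 : trOp A ^ 2 ≤ n * ∑ i, ‖A (ev n i)‖ ^ 2 := by
  have h1 := sq_sum_le_card_mul_sum_sq (s := Finset.univ) (f := fun i => ⟪ev n i, A (ev n i)⟫)
  simp only [Finset.card_univ, Fintype.card_fin] at h1
  refine h1.trans ?_
  refine mul_le_mul_of_nonneg_left (Finset.sum_le_sum fun i _ => ?_) (Nat.cast_nonneg n)
  have h2 := abs_real_inner_le_norm (ev n i) (A (ev n i))
  rw [aux_ev_norm, one_mul] at h2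
  rw [← sq_abs]
  exact pow_le_pow_left₀ (abs_nonneg _) h2 2

lemma aux_MOp {u : EuclideanSpace ℝ (Fin n) → ℝ} {x : EuclideanSpace ℝ (Fin n)}
    (hG : HasFDerivAt (gradient u) A x) (hx : ‖gradient u x‖ < 1) :
    MOp n u x = trOp A / Real.sqrt (1 - ‖gradient u x‖ ^ 2) +
      ⟪gradient u x, A (gradient u x)⟫ /
        ((1 - ‖gradient u x‖ ^ 2) * Real.sqrt (1 - ‖gradient u x‖ ^ 2)) := by
  set G := gradient u with hGdef
  set s := 1 - ‖G x‖ ^ 2 with hs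
  have hspos : 0 < s := by
    have := norm_nonneg (G x)
    nlinarith
  have hsq : 0 < Real.sqrt s := Real.sqrt_pos.mpr hspos
  have hss : Real.sqrt s * Real.sqrt s = s := Real.mul_self_sqrt hspos.le
  have term : ∀ i : Fin n,
      fderiv ℝ (fun y => fderiv ℝ u y (ev n i) / Real.sqrt (1 - ‖gradient u y‖ ^ 2)) x (ev n i)
      = ⟪ev n i, A (ev n i)⟫ / Real.sqrt s
        + ⟪ev n i, G x⟫ * ⟪G x, A (ev n i)⟫ / (s * Real.sqrt s) := by
    intro i
    have hfun : (fun y => fderiv ℝ u y (ev n i) / Real.sqrt (1 - ‖gradient u y‖ ^ 2))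
        = fun y => ⟪G y, ev n i⟫ / Real.sqrt (1 - ‖G y‖ ^ 2) := by
      funext y
      rw [hGdef, inner_gradient_left]
    rw [hfun]
    have hd1 : DifferentiableAt ℝ (fun y => ⟪G y, ev n i⟫) x :=
      hG.differentiableAt.inner ℝ (differentiableAt_const _)
    have hd2 : DifferentiableAt ℝ (fun y => Real.sqrt (1 - ‖G y‖ ^ 2)) x :=
      ((hG.differentiableAt.norm_sq ℝ).const_sub 1).sqrt hspos.ne'
    have hd : DifferentiableAt ℝ (fun y => ⟪G y, ev n i⟫ / Real.sqrt (1 - ‖G y‖ ^ 2)) x :=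
      by
      have h3 := hd1.mul (hd2.inv hsq.ne')
      simp only [div_eq_mul_inv]
      exact h3
    have hl : HasDerivAt (fun t : ℝ => ⟪G (x + t • ev n i), ev n i⟫ /
        Real.sqrt (1 - ‖G (x + t • ev n i)‖ ^ 2)) (fderiv ℝ (fun y => ⟪G y, ev n i⟫ /
        Real.sqrt (1 - ‖G y‖ ^ 2)) x (ev n i)) 0 := by
      have h0 : HasFDerivAt (fun y => ⟪G y, ev n i⟫ / Real.sqrt (1 - ‖G y‖ ^ 2))
        (fderiv ℝ (fun y => ⟪G y, ev n i⟫ / Real.sqrt (1 - ‖G y‖ ^ 2)) x)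
        (x + (0:ℝ) • ev n i) := by simpa using hd.hasFDerivAt
      exact aux_fd_line h0
    have hGl : HasDerivAt (fun t : ℝ => G (x + t • ev n i)) (A (ev n i)) 0 :=
      aux_fd_line (by simpa using hG)
    have hn1 := hGl.inner ℝ (hasDerivAt_const (0:ℝ) (ev n i))
    have hn2 := (hGl.norm_sq.const_sub 1).sqrt (by simpa using hspos.ne')
    have hq := hn1.div hn2 (by simpa using hsq.ne')
    have := hl.unique hq
    rw [this]
    simp only [zero_smul, add_zero, inner_zero_right, zero_add, ← hs]
    rw [real_inner_comm (ev n i) (A (ev n i)), real_inner_comm (ev n i) (G x)]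
    rw [Real.sq_sqrt hspos.le]
    field_simp
    rw [pow_two, hss]
    ring
  rw [MOp, Finset.sum_congr rfl fun i _ => term i, Finset.sum_add_distrib, ← Finset.sum_div,
    ← Finset.sum_div]
  congr 2
  have : G x = ∑ i, ⟪ev n i, G x⟫ • ev n i := (aux_ev_repr _).symm
  conv_rhs => rw [this, map_sum, ← this]
  rw [inner_sum]
  simp [inner_smul_right]

lemma aux_deriv_eq {G : EuclideanSpace ℝ (Fin n) → EuclideanSpace ℝ (Fin n)}
    {A : EuclideanSpace ℝ (Fin n) → EuclideanSpace ℝ (Fin n) →L[ℝ] EuclideanSpace ℝ (Fin n)}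
    {B : EuclideanSpace ℝ (Fin n) →L[ℝ] EuclideanSpace ℝ (Fin n) →L[ℝ] EuclideanSpace ℝ (Fin n)}
    {x b : EuclideanSpace ℝ (Fin n)} {c : ℝ}
    (hG : HasFDerivAt G (A x) x) (hA : HasFDerivAt A B x) (hx : ‖G x‖ < 1)
    (hs : ∀ a b, ⟪A x a, b⟫ = ⟪A x b, a⟫)
    (heq : ∀ᶠ y in nhds x, (1 - ‖G y‖ ^ 2) * trOp (A y) + ⟪G y, A y (G y)⟫ =
      c * ((1 - ‖G y‖ ^ 2) * Real.sqrt (1 - ‖G y‖ ^ 2))) :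
    (1 - ‖G x‖ ^ 2) * trOp (B b) + ⟪G x, B b (G x)⟫ =
      2 * ⟪G x, A x b⟫ * trOp (A x) - 2 * ⟪A x (G x), A x b⟫
        - 3 * c * Real.sqrt (1 - ‖G x‖ ^ 2) * ⟪G x, A x b⟫ := by
  set s := 1 - ‖G x‖ ^ 2 with hs'
  have hspos : 0 < s := by
    have := norm_nonneg (G x)
    nlinarith
  have hsq : 0 < Real.sqrt s := Real.sqrt_pos.mpr hspos
  have hss : Real.sqrt s * Real.sqrt s = s := Real.mul_self_sqrt hspos.le
  have hGl : HasDerivAt (fun t : ℝ => G (x + t • b)) (A x b) 0 :=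
    aux_fd_line (by simpa using hG)
  have hAl : HasDerivAt (fun t : ℝ => A (x + t • b)) (B b) 0 :=
    aux_fd_line (by simpa using hA)
  have hsl := hGl.norm_sq.const_sub 1
  have htr : HasDerivAt (fun t : ℝ => trOp (A (x + t • b))) (trOp (B b)) 0 := by
    unfold trOp
    apply HasDerivAt.fun_sum
    intro i _
    have h1 := (hasDerivAt_const (0:ℝ) (ev n i)).inner ℝ (hAl.clm_apply (hasDerivAt_const (0:ℝ) (ev n i)))
    refine HasDerivAt.congr_deriv h1 ?_
    simp
  have hL := (hsl.mul htr).add (hGl.inner ℝ (hAl.clm_apply hGl))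
  have hR := (hsl.mul (hsl.sqrt (by simpa using hspos.ne'))).const_mul c
  have htend : Filter.Tendsto (fun t : ℝ => x + t • b) (nhds 0) (nhds x) := by
    have := (aux_line x b 0).continuousAt.tendsto
    simpa using this
  have hR' := hR.congr_of_eventuallyEq (htend.eventually heq)
  have := HasDerivAt.unique hL hR'
  simp only [zero_smul, add_zero, ← hs', inner_add_right] at this
  have e1 : ⟪G x, A x (A x b)⟫ = ⟪A x (G x), A x b⟫ := by
    rw [real_inner_comm, hs, real_inner_comm, real_inner_comm]
  have e2 : ⟪A x b, A x (G x)⟫ = ⟪A x (G x), A x b⟫ := real_inner_comm _ _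
  rw [e1, e2] at this
  have e3 : s * (-(2 * ⟪G x, A x b⟫) / (2 * Real.sqrt s)) = - Real.sqrt s * ⟪G x, A x b⟫ := by
    field_simp
    rw [pow_two, hss]
    ring
  rw [e3] at this
  linarith
end eucl
section pde
variable {n : ℕ}

lemma aux_upper {E : Type*} [NormedAddCommGroup E] [InnerProductSpace ℝ E] [CompleteSpace E]
    [ProperSpace E] {u : E → ℝ} {U : Set E} (hU : IsOpen U) (hu : ContDiffOn ℝ (⊤ : ℕ∞) u U)
    {z : E} {r : ℝ} (hr : 0 < r) (hb : Metric.closedBall z r ⊆ U)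
    (hG1 : ∀ x ∈ Metric.closedBall z r, ‖gradient u x‖ ≤ 1) :
    ∃ x ∈ Metric.ball z r, ∀ e, ⟪e, fderiv ℝ (gradient u) x e⟫ ≤ 3 / r * ‖e‖ ^ 2 := by
  have hG := aux_contDiff_grad hU hu
  have hgrad : ∀ y ∈ U, HasGradientAt u (gradient u y) y := fun y hy =>
    ((hu.contDiffAt (hU.mem_nhds hy)).differentiableAt (by simp)).hasGradientAt
  set F : E → ℝ := fun y => 3 / r / 2 * ‖y - z‖ ^ 2 - u y with hF
  have hFc : ContinuousOn F (Metric.closedBall z r) := by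
    apply ContinuousOn.sub
    · fun_prop
    · exact hu.continuousOn.mono hb
  obtain ⟨x, hx, hmin⟩ := (isCompact_closedBall z r).exists_isMinOn
    ⟨z, Metric.mem_closedBall_self hr.le⟩ hFc
  have hxb : x ∈ Metric.ball z r := by
    by_contra hnot
    have hxr : ‖x - z‖ = r := by
      rw [Metric.mem_closedBall, dist_eq_norm] at hx
      rw [Metric.mem_ball, dist_eq_norm, not_lt] at hnot
      exact le_antisymm hx hnot
    have h1 : F x ≤ F z := hmin (Metric.mem_closedBall_self hr.le)
    have h2 : ‖u x - u z‖ ≤ 1 * ‖x - z‖ := by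
      refine (convex_closedBall z r).norm_image_sub_le_of_norm_hasFDerivWithin_le
        (f' := fun y => innerSL ℝ (gradient u y))
        (fun y hy => (aux_grad_fderiv (hgrad y (hb hy))).hasFDerivWithinAt) ?_
        (Metric.mem_closedBall_self hr.le) hx
      intro y hy
      rw [innerSL_apply_norm]; exact hG1 y hy
    have h3 := (abs_le.mp (by simpa [Real.norm_eq_abs] using h2)).2
    simp only [hF, sub_self, norm_zero, hxr] at h1
    rw [hxr] at h3
    have h4 : 3 / r / 2 * r ^ 2 = 3 / 2 * r := by field_simp
    rw [h4] at h1
    norm_num at h1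
    linarith
  refine ⟨x, hxb, ?_⟩
  have hloc : IsLocalMin F x :=
    (hmin.on_subset Metric.ball_subset_closedBall).isLocalMin (Metric.isOpen_ball.mem_nhds hxb)
  have hxU : x ∈ U := hb (Metric.ball_subset_closedBall hxb)
  have hFg : ∀ᶠ y in nhds x, HasGradientAt F ((3 / r) • (y - z) - gradient u y) y := by
    filter_upwards [hU.mem_nhds hxU] with y hy
    have h1 : HasFDerivAt (fun y => y - z) (ContinuousLinearMap.id ℝ E) y :=
      (hasFDerivAt_id y).sub_const z
    have h2 := (h1.norm_sq.const_mul (3 / r / 2)).sub (aux_grad_fderiv (hgrad y hy))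
    refine aux_of_fderiv h2 ?_
    intro e
    simp [inner_sub_left, inner_smul_left]
    ring
  have hF' : HasFDerivAt (fun y => (3 / r) • (y - z) - gradient u y)
      ((3 / r) • ContinuousLinearMap.id ℝ E - fderiv ℝ (gradient u) x) x := by
    have h1 : HasFDerivAt (fun y => y - z) (ContinuousLinearMap.id ℝ E) x :=
      (hasFDerivAt_id x).sub_const z
    exact (h1.const_smul (3 / r)).sub
      ((hG.contDiffAt (hU.mem_nhds hxU)).differentiableAt (by simp)).hasFDerivAt
  intro e
  have := (aux_sot hFg hF' hloc).2 e
  simp only [sub_apply, smul_apply,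
    ContinuousLinearMap.id_apply, inner_sub_right, inner_smul_right,
    real_inner_self_eq_norm_sq] at this
  linarith

set_option maxHeartbeats 2000000 in
lemma aux_key {u g h : EuclideanSpace ℝ (Fin n) → ℝ} {U : Set (EuclideanSpace ℝ (Fin n))}
    (hn : 0 < n) (hU : IsOpen U) (hu : ContDiffOn ℝ (⊤ : ℕ∞) u U)
    {x : EuclideanSpace ℝ (Fin n)} (hx : x ∈ U)
    {θ s₀ c K M₁ M₂ ε : ℝ} (hθ : 0 < θ) (hs₀ : 0 < s₀) (hε : 0 < ε)
    (hG1 : s₀ ≤ 1 - ‖gradient u x‖ ^ 2)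
    (hpos : ∀ ξ, 0 ≤ ⟪ξ, fderiv ℝ (gradient u) x ξ⟫)
    (hc0 : 0 < c) (hcK : c ≤ K)
    (heq : ∀ᶠ y in nhds x, (1 - ‖gradient u y‖ ^ 2) * trOp (fderiv ℝ (gradient u) y)
      + ⟪gradient u y, fderiv ℝ (gradient u) y (gradient u y)⟫ =
      c * ((1 - ‖gradient u y‖ ^ 2) * Real.sqrt (1 - ‖gradient u y‖ ^ 2)))
    (hconc : ∀ p q, h q ≤ h p + ⟪gradient h p, q - p⟫ - θ / 2 * ‖q - p‖ ^ 2)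
    (hg : ContDiff ℝ (⊤ : ℕ∞) g) (hM₁ : ‖gradient g x‖ ≤ M₁)
    (hM₂ : ‖fderiv ℝ (gradient g) x‖ ≤ M₂)
    (hmin : IsLocalMin (fun y => h (gradient u y) - ε * g y) x) :
    θ * s₀ * (c ^ 2 * s₀ ^ 3) ≤ n * (ε * (7 * K * M₁ + (n + 1) * M₂)) := by
  have hGs := aux_contDiff_grad hU hu
  have hsymU : ∀ y ∈ U, ∀ a b, ⟪fderiv ℝ (gradient u) y a, b⟫ = ⟪fderiv ℝ (gradient u) y b, a⟫ :=
    fun y hy => aux_symm hU hu hy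
  have hGd : ∀ y ∈ U, HasFDerivAt (gradient u) (fderiv ℝ (gradient u) y) y := fun y hy =>
    ((hGs.contDiffAt (hU.mem_nhds hy)).differentiableAt (by simp)).hasFDerivAt
  have hAs : ContDiffOn ℝ (⊤ : ℕ∞) (fderiv ℝ (gradient u)) U := hGs.fderiv_of_isOpen hU (by simp)
  have hAd : HasFDerivAt (fderiv ℝ (gradient u)) (fderiv ℝ (fderiv ℝ (gradient u)) x) x :=
    ((hAs.contDiffAt (hU.mem_nhds hx)).differentiableAt (by simp)).hasFDerivAt
  have hBs : ∀ a b, fderiv ℝ (fderiv ℝ (gradient u)) x a b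
      = fderiv ℝ (fderiv ℝ (gradient u)) x b a := by
    intro a b
    exact second_derivative_symmetric_of_eventually
      (by filter_upwards [hU.mem_nhds hx] with y hy using hGd y hy) hAd a b
  have hgs : ContDiffOn ℝ (⊤ : ℕ∞) (gradient g) Set.univ :=
    aux_contDiff_grad isOpen_univ hg.contDiffOn
  have hgd : HasFDerivAt (gradient g) (fderiv ℝ (gradient g) x) x :=
    ((hgs.contDiffAt Filter.univ_mem).differentiableAt (by simp)).hasFDerivAt
  have hgg : ∀ y, HasGradientAt g (gradient g y) y := fun y =>
    (hg.differentiable (by simp) y).hasGradientAt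
  set G := gradient u with hGdef
  set A := fderiv ℝ G with hAdef
  set B := fderiv ℝ A x with hBdef
  set H := fderiv ℝ (gradient g) x with hHdef
  set b := gradient h (G x) with hb
  set s := 1 - ‖G x‖ ^ 2 with hs
  have hspos : 0 < s := lt_of_lt_of_le hs₀ hG1
  have hGle : ‖G x‖ < 1 := by
    have := norm_nonneg (G x)
    nlinarith
  have hs1 : s ≤ 1 := by rw [hs]; nlinarith [norm_nonneg (G x)]
  -- the touching function
  set φ : EuclideanSpace ℝ (Fin n) → ℝ :=
    fun y => ⟪b, G y⟫ - θ / 2 * ‖G y - G x‖ ^ 2 - ε * g y with hφ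
  have hφmin : IsLocalMin φ x := by
    filter_upwards [hmin] with y hy
    have h1 := hconc (G x) (G y)
    rw [← hb, inner_sub_right] at h1
    simp only [hφ, sub_self, norm_zero]
    norm_num
    linarith
  set F : EuclideanSpace ℝ (Fin n) → EuclideanSpace ℝ (Fin n) :=
    fun y => A y b - θ • A y (G y - G x) - ε • gradient g y with hF
  have hφg : ∀ᶠ y in nhds x, HasGradientAt φ (F y) y := by
    filter_upwards [hU.mem_nhds hx] with y hy
    have h1 := (hasFDerivAt_const b y).inner ℝ (hGd y hy)
    have h2 := (((hGd y hy).sub_const (G x)).norm_sq).const_mul (θ / 2)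
    have h3 := (aux_grad_fderiv (hgg y)).const_mul ε
    refine aux_of_fderiv ((h1.sub h2).sub h3) ?_
    intro e
    have e1 : ⟪b, A y e⟫ = ⟪A y b, e⟫ := by rw [real_inner_comm, hsymU y hy]
    have e2 : ∀ v, ⟪v, A y e⟫ = ⟪A y v, e⟫ := by
      intro v; rw [real_inner_comm, hsymU y hy]
    simp only [hF, inner_sub_left, real_inner_smul_left]
    simp [e2, inner_sub_left]
    ring
  have hφF : HasFDerivAt F _ x :=
    ((hAd.clm_apply (hasFDerivAt_const b x)).sub
      ((hAd.clm_apply ((hGd x hx).sub_const (G x))).const_smul θ)).sub (hgd.const_smul ε)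
  obtain ⟨hF0, hF2⟩ := aux_sot hφg hφF hφmin
  have hAb : A x b = ε • gradient g x := by
    simp only [hF, sub_self, map_zero, smul_zero, sub_zero] at hF0
    exact sub_eq_zero.mp hF0
  have hsym := hsymU x hx
  have hM₂' : ∀ e, -(M₂ * ‖e‖ ^ 2) ≤ ⟪e, H e⟫ := by
    intro e
    have h1 := abs_real_inner_le_norm e (H e)
    have h2 := H.le_opNorm e
    have h3 : ‖H‖ * ‖e‖ ≤ M₂ * ‖e‖ := mul_le_mul_of_nonneg_right hM₂ (norm_nonneg e)
    have h4 := (abs_le.mp h1).1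
    nlinarith [norm_nonneg e]
  have hquad : ∀ e, θ * ‖A x e‖ ^ 2 ≤ ⟪e, B b e⟫ + ε * (M₂ * ‖e‖ ^ 2) := by
    intro e
    have h1 := hF2 e
    have e2 : ⟪e, A x (A x e)⟫ = ‖A x e‖ ^ 2 := by
      rw [real_inner_comm, hsym, real_inner_self_eq_norm_sq]
    simp [inner_sub_right, inner_smul_right] at h1
    rw [e2, hBs e b] at h1
    have := mul_le_mul_of_nonneg_left (hM₂' e) hε.le
    linarith
  -- the differentiated equation
  have hder := aux_deriv_eq (b := b) (hGd x hx) hAd hGle hsym heq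
  have heqx := heq.self_of_nhds
  rw [← hs] at hder heqx
  set T := trOp (A x) with hT
  have hT0 : 0 ≤ T := aux_tr_nonneg hpos
  have hq1 : ⟪G x, A x (G x)⟫ ≤ T * (1 - s) := by
    have := aux_tr3 hsym hpos (G x)
    have e : 1 - s = ‖G x‖ ^ 2 := by rw [hs]; ring
    rw [e]; exact this
  set q := Real.sqrt s with hq
  have hq0 : 0 < q := Real.sqrt_pos.mpr hspos
  have hqq : q * q = s := Real.mul_self_sqrt hspos.le
  have hq1' : q ≤ 1 := Real.sqrt_le_one.mpr hs1
  have hTlow : c * (s * q) ≤ T := by linarith only [hq1, heqx]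
  have hTup : T ≤ c := by
    have h1 : s * T ≤ s * (c * q) := by linarith only [hpos (G x), heqx]
    have h2 := le_of_mul_le_mul_left h1 hspos
    have h3 := mul_le_mul_of_nonneg_left hq1' hc0.le
    linarith only [h2, h3]
  have hTsq : c ^ 2 * s₀ ^ 3 ≤ T ^ 2 := by
    have h1 : (c * (s * q)) ^ 2 ≤ T ^ 2 := pow_le_pow_left₀ (by positivity) hTlow 2
    have h2 : (c * (s * q)) ^ 2 = c ^ 2 * s ^ 3 := by
      calc (c * (s * q)) ^ 2 = c ^ 2 * s ^ 2 * (q * q) := by ring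
        _ = _ := by rw [hqq]; ring
    have h3 : s₀ ^ 3 ≤ s ^ 3 := pow_le_pow_left₀ hs₀.le hG1 3
    have h4 := mul_le_mul_of_nonneg_left h3 (sq_nonneg c)
    linarith
  have h4 : T ^ 2 ≤ n * ∑ i, ‖A x (ev n i)‖ ^ 2 := aux_tr4
  have hsum : θ * ∑ i, ‖A x (ev n i)‖ ^ 2 ≤ trOp (B b) + n * (ε * M₂) := by
    rw [Finset.mul_sum, trOp]
    have : (n : ℝ) * (ε * M₂) = ∑ i : Fin n, ε * M₂ := by simp
    rw [this, ← Finset.sum_add_distrib]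
    refine Finset.sum_le_sum fun i _ => ?_
    have := hquad (ev n i)
    rw [aux_ev_norm] at this
    simpa using this
  have hGG := hquad (G x)
  have hM₂0 : 0 ≤ M₂ := (norm_nonneg _).trans hM₂
  have hM₁0 : 0 ≤ M₁ := (norm_nonneg _).trans hM₁
  have hAbn : ‖A x b‖ ≤ ε * M₁ := by
    rw [hAb, norm_smul, Real.norm_eq_abs, abs_of_pos hε]
    exact mul_le_mul_of_nonneg_left hM₁ hε.le
  have hi1 : |⟪G x, A x b⟫| ≤ ε * M₁ := by
    have := abs_real_inner_le_norm (G x) (A x b)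
    nlinarith [norm_nonneg (A x b), norm_nonneg (G x)]
  have hi2 : |⟪A x (G x), A x b⟫| ≤ c * (ε * M₁) := by
    have h1 := abs_real_inner_le_norm (A x (G x)) (A x b)
    have h2 := aux_tr2 hsym hpos (G x)
    have h3 : ‖A x (G x)‖ ≤ c := by nlinarith [norm_nonneg (G x)]
    exact h1.trans (mul_le_mul h3 hAbn (norm_nonneg _) hc0.le)
  have hP0 : 0 ≤ ε * M₁ := by positivity
  have hrhs : s * trOp (B b) + ⟪G x, B b (G x)⟫ ≤ 7 * c * (ε * M₁) := by
    rw [hder]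
    obtain ⟨a1, a2⟩ := abs_le.mp hi1
    obtain ⟨b1, b2⟩ := abs_le.mp hi2
    have t1 : ⟪G x, A x b⟫ * T ≤ c * (ε * M₁) := by
      calc ⟪G x, A x b⟫ * T ≤ (ε * M₁) * T := mul_le_mul_of_nonneg_right a2 hT0
        _ ≤ (ε * M₁) * c := mul_le_mul_of_nonneg_left hTup hP0
        _ = _ := by ring
    have t2 : -(c * (ε * M₁)) ≤ c * q * ⟪G x, A x b⟫ := by
      have hcq : c * q ≤ c := by nlinarith
      have : c * q * (-(ε * M₁)) ≤ c * q * ⟪G x, A x b⟫ :=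
        mul_le_mul_of_nonneg_left a1 (by positivity)
      have := mul_le_mul_of_nonneg_right hcq hP0
      linarith
    linarith
  have hfin : θ * s₀ * ∑ i, ‖A x (ev n i)‖ ^ 2 ≤ ε * (7 * K * M₁ + (n + 1) * M₂) := by
    set S := ∑ i, ‖A x (ev n i)‖ ^ 2 with hS
    have hS0 : 0 ≤ S := Finset.sum_nonneg fun i _ => sq_nonneg _
    have t1 : s₀ * (θ * S) ≤ s * (θ * S) := mul_le_mul_of_nonneg_right hG1 (by positivity)
    have t2 := mul_le_mul_of_nonneg_left hsum hspos.le
    have t3 : s * (n * (ε * M₂)) ≤ 1 * (n * (ε * M₂)) :=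
      mul_le_mul_of_nonneg_right hs1 (by positivity)
    have t4 : ε * (M₂ * ‖G x‖ ^ 2) ≤ ε * (M₂ * 1) := by
      have : ‖G x‖ ^ 2 ≤ 1 := by linarith
      gcongr
    have t5 : 0 ≤ θ * ‖A x (G x)‖ ^ 2 := by positivity
    have t6 : c * (ε * M₁) ≤ K * (ε * M₁) := mul_le_mul_of_nonneg_right hcK hP0
    linarith
  have hn' : (0:ℝ) < n := by exact_mod_cast hn
  calc θ * s₀ * (c ^ 2 * s₀ ^ 3) ≤ θ * s₀ * (n * ∑ i, ‖A x (ev n i)‖ ^ 2) :=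
        mul_le_mul_of_nonneg_left (hTsq.trans h4) (by positivity)
    _ = n * (θ * s₀ * ∑ i, ‖A x (ev n i)‖ ^ 2) := by ring
    _ ≤ _ := mul_le_mul_of_nonneg_left hfin hn'.le
end pde
/-- Lemma 3.6, strict obliqueness.  There is `C₁ > 0`, depending only on
the domains, with `⟨∇h(∇u(x)), ∇h̃(x)⟩ ≥ 1/C₁` on `∂Ω` for every strictly convex solution. -/
theorem statement10 (n : ℕ) (hn : 2 ≤ n) (Ω Ω' : Set (EuclideanSpace ℝ (Fin n)))
    (g h : EuclideanSpace ℝ (Fin n) → ℝ) (θ₁ θ₂ : ℝ)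
    (hΩb : Bornology.IsBounded Ω) (hΩ'b : Bornology.IsBounded Ω')
    (hΩ : IsUnifConvexDefFn n Ω g θ₁) (hΩ' : IsUnifConvexDefFn n Ω' h θ₂)
    (hsub : closure Ω' ⊆ Metric.ball (0 : EuclideanSpace ℝ (Fin n)) 1) :
    ∃ C₁ : ℝ, 0 < C₁ ∧
      ∀ (u : EuclideanSpace ℝ (Fin n) → ℝ) (c : ℝ), IsSol n Ω Ω' u c →
        ∀ x ∈ frontier Ω, 1 / C₁ ≤ ⟪gradient h (gradient u x), gradient g x⟫ := by

  obtain ⟨hgs, hΩeq, hgn, hθ₁, hgc⟩ := hΩ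
  obtain ⟨hhs, hΩ'eq, hhn, hθ₂, hhc⟩ := hΩ'
  rcases Ω.eq_empty_or_nonempty with hemp | ⟨z, hz⟩
  · refine ⟨1, one_pos, fun u c _ x hx => ?_⟩
    rw [hemp] at hx; simp at hx
  rcases Ω'.eq_empty_or_nonempty with hemp | ⟨p, hp⟩
  · refine ⟨1, one_pos, fun u c hsol x hx => ?_⟩
    have := hsol.2.2.2.1.mapsTo hz
    rw [hemp] at this; simp at this
  have hgG : ContDiff ℝ (⊤ : ℕ∞) (gradient g) :=
    contDiffOn_univ.mp (aux_contDiff_grad isOpen_univ hgs.contDiffOn)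
  have hhG : ContDiff ℝ (⊤ : ℕ∞) (gradient h) :=
    contDiffOn_univ.mp (aux_contDiff_grad isOpen_univ hhs.contDiffOn)
  have hgconc := aux_conc hgs hgG hgc
  have hhconc := aux_conc hhs hhG hhc
  have hΩo : IsOpen Ω := by
    rw [hΩeq]; exact isOpen_lt continuous_const hgs.continuous
  have hΩ'o : IsOpen Ω' := by
    rw [hΩ'eq]; exact isOpen_lt continuous_const hhs.continuous
  have hΩconv : Convex ℝ Ω := by
    rw [hΩeq]; exact aux_convex hθ₁ hgconc
  have hcl : IsCompact (closure Ω) := hΩb.isCompact_closure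
  have hcl' : IsCompact (closure Ω') := hΩ'b.isCompact_closure
  have hn0 : 0 < n := by omega
  -- second point of the target
  obtain ⟨r', hr', hball'⟩ := Metric.isOpen_iff.mp hΩ'o p hp
  obtain ⟨p₂, hp₂, hpd⟩ : ∃ p₂ ∈ Ω', 0 < ‖p₂ - p‖ := by
    refine ⟨p + (r' / 2) • ev n ⟨0, hn0⟩, hball' ?_, ?_⟩
    · rw [Metric.mem_ball, dist_eq_norm, add_sub_cancel_left, norm_smul, aux_ev_norm,
        Real.norm_eq_abs, abs_of_pos (by positivity)]
      linarith
    · rw [add_sub_cancel_left, norm_smul, aux_ev_norm, Real.norm_eq_abs,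
        abs_of_pos (by positivity)]
      linarith
  -- ball in Ω
  obtain ⟨r, hr, hball⟩ := Metric.nhds_basis_closedBall.mem_iff.mp (hΩo.mem_nhds hz)
  -- bound on the target
  obtain ⟨pm, hpm, hpmax⟩ := hcl'.exists_isMaxOn ⟨p, subset_closure hp⟩ continuous_norm.continuousOn
  obtain ⟨s₀, hs₀, hs₀b⟩ : ∃ s₀ : ℝ, 0 < s₀ ∧ ∀ q ∈ closure Ω', s₀ ≤ 1 - ‖q‖ ^ 2 := by
    refine ⟨1 - ‖pm‖ ^ 2, ?_, ?_⟩
    · have := hsub hpm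
      rw [Metric.mem_ball, dist_zero_right] at this
      nlinarith [norm_nonneg pm]
    · intro q hq
      have h1 : ‖q‖ ≤ ‖pm‖ := hpmax hq
      have := pow_le_pow_left₀ (norm_nonneg q) h1 2
      linarith
  -- bounds for g
  obtain ⟨M₁, hM₁⟩ := hcl.exists_bound_of_continuousOn (f := gradient g) hgG.continuous.continuousOn
  obtain ⟨M₂, hM₂⟩ := hcl.exists_bound_of_continuousOn (f := fderiv ℝ (gradient g))
    (hgG.continuous_fderiv (by simp)).continuousOn
  have hM₁0 : 0 ≤ M₁ := (norm_nonneg _).trans (hM₁ z (subset_closure hz))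
  have hM₂0 : 0 ≤ M₂ := (norm_nonneg _).trans (hM₂ z (subset_closure hz))
  -- diameter bound
  obtain ⟨D, hD⟩ := hcl.exists_bound_of_continuousOn
    (f := fun x : EuclideanSpace ℝ (Fin n) => x) continuous_id.continuousOn
  have hD0 : 0 ≤ D := (norm_nonneg _).trans (hD z (subset_closure hz))
  have hnR : (0:ℝ) < n := by exact_mod_cast hn0
  -- constants
  obtain ⟨k, hk⟩ : ∃ k : ℝ, k = ‖p₂ - p‖ / (2 * D + 1) := ⟨_, rfl⟩
  have hk0 : 0 < k := by rw [hk]; positivity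
  obtain ⟨K, hK⟩ : ∃ K : ℝ, K = n * (3 / r) / (s₀ * Real.sqrt s₀) := ⟨_, rfl⟩
  have hsq₀ : 0 < Real.sqrt s₀ := Real.sqrt_pos.mpr hs₀
  have hK0 : 0 < K := by rw [hK]; positivity
  obtain ⟨Q, hQ⟩ : ∃ Q : ℝ, Q = n * (7 * K * M₁ + (n + 1) * M₂) + 1 := ⟨_, rfl⟩
  have hQ0 : 0 < Q := by rw [hQ]; positivity
  obtain ⟨ε, hε⟩ : ∃ ε : ℝ, ε = θ₂ * s₀ * (k ^ 2 * s₀ ^ 3) / Q := ⟨_, rfl⟩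
  have hε0 : 0 < ε := by rw [hε]; positivity
  have hεlt : n * (ε * (7 * K * M₁ + (n + 1) * M₂)) < θ₂ * s₀ * (k ^ 2 * s₀ ^ 3) := by
    have h1 : ε * Q = θ₂ * s₀ * (k ^ 2 * s₀ ^ 3) := by rw [hε]; field_simp
    rw [← h1, hQ]
    linarith
  refine ⟨K / ε, by positivity, ?_⟩
  intro u c hsol x₀ hx₀
  obtain ⟨⟨U, hU, hclU, hu⟩, hspace, hposd, hbij, heqn⟩ := hsol
  have hGs := aux_contDiff_grad hU hu
  have hGd : ∀ y ∈ U, HasFDerivAt (gradient u) (fderiv ℝ (gradient u) y) y := fun y hy =>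
    ((hGs.contDiffAt (hU.mem_nhds hy)).differentiableAt (by simp)).hasFDerivAt
  have hAs : ContDiffOn ℝ (⊤ : ℕ∞) (fderiv ℝ (gradient u)) U := hGs.fderiv_of_isOpen hU (by simp)
  have hsym : ∀ y ∈ U, ∀ a b, ⟪fderiv ℝ (gradient u) y a, b⟫ = ⟪fderiv ℝ (gradient u) y b, a⟫ :=
    fun y hy => aux_symm hU hu hy
  have hpos : ∀ y ∈ closure Ω, ∀ ξ, 0 ≤ ⟪ξ, fderiv ℝ (gradient u) y ξ⟫ := by
    intro y hy ξ
    by_cases h0 : ξ = 0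
    · simp [h0]
    · exact (hposd y hy ξ h0).le
  have hΩU : Ω ⊆ U := subset_closure.trans hclU
  have hGcl : ∀ y ∈ closure Ω, gradient u y ∈ closure Ω' := by
    intro y hy
    have hcont : ContinuousOn (gradient u) (closure Ω) := hGs.continuousOn.mono hclU
    exact hbij.mapsTo.closure_of_continuousOn hcont hy
  -- the equation
  have heq : ∀ y ∈ Ω, (1 - ‖gradient u y‖ ^ 2) * trOp (fderiv ℝ (gradient u) y)
      + ⟪gradient u y, fderiv ℝ (gradient u) y (gradient u y)⟫ =
      c * ((1 - ‖gradient u y‖ ^ 2) * Real.sqrt (1 - ‖gradient u y‖ ^ 2)) := by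
    intro y hy
    have h1 := heqn y hy
    rw [aux_MOp (hGd y (hΩU hy)) (hspace y (subset_closure hy))] at h1
    have hs : 0 < 1 - ‖gradient u y‖ ^ 2 :=
      lt_of_lt_of_le hs₀ (hs₀b _ (hGcl y (subset_closure hy)))
    have hq := Real.sqrt_pos.mpr hs
    rw [← h1]
    field_simp
  have htr_up : ∀ y ∈ Ω, trOp (fderiv ℝ (gradient u) y) ≤ c := by
    intro y hy
    have h1 := heq y hy
    have hs : 0 < 1 - ‖gradient u y‖ ^ 2 :=
      lt_of_lt_of_le hs₀ (hs₀b _ (hGcl y (subset_closure hy)))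
    have hs1 : 1 - ‖gradient u y‖ ^ 2 ≤ 1 := by nlinarith [norm_nonneg (gradient u y)]
    have hq := Real.sqrt_pos.mpr hs
    have hq1 : Real.sqrt (1 - ‖gradient u y‖ ^ 2) ≤ 1 := Real.sqrt_le_one.mpr hs1
    have hp1 := hpos y (subset_closure hy) (gradient u y)
    have hT := aux_tr_nonneg (hpos y (subset_closure hy))
    have h2 : (1 - ‖gradient u y‖ ^ 2) * trOp (fderiv ℝ (gradient u) y) ≤
        (1 - ‖gradient u y‖ ^ 2) * (c * Real.sqrt (1 - ‖gradient u y‖ ^ 2)) := by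
      linarith only [h1, hp1]
    have h3 := le_of_mul_le_mul_left h2 hs
    have hc : 0 ≤ c := by
      by_contra hc
      push Not at hc
      have := mul_neg_of_neg_of_pos hc hq
      linarith only [this, h3, hT]
    have h4 := mul_le_mul_of_nonneg_left hq1 hc
    linarith only [h3, h4]
  have hAbd : ∀ y ∈ Ω, ‖fderiv ℝ (gradient u) y‖ ≤ c := by
    intro y hy
    have hT := aux_tr_nonneg (hpos y (subset_closure hy))
    refine ContinuousLinearMap.opNorm_le_bound _ (hT.trans (htr_up y hy)) fun v => ?_
    refine (aux_tr2 (hsym y (hΩU hy)) (hpos y (subset_closure hy)) v).trans ?_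
    exact mul_le_mul_of_nonneg_right (htr_up y hy) (norm_nonneg v)
  -- lower bound on c
  have hc0 : 0 ≤ c := (norm_nonneg _).trans (hAbd z hz)
  have hkc : k ≤ c := by
    obtain ⟨y₁, hy₁, e₁⟩ := hbij.surjOn hp
    obtain ⟨y₂, hy₂, e₂⟩ := hbij.surjOn hp₂
    have h1 : ‖gradient u y₂ - gradient u y₁‖ ≤ c * ‖y₂ - y₁‖ :=
      hΩconv.norm_image_sub_le_of_norm_hasFDerivWithin_le
        (fun y hy => (hGd y (hΩU hy)).hasFDerivWithinAt) hAbd hy₁ hy₂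
    rw [e₁, e₂] at h1
    have h2 : ‖y₂ - y₁‖ ≤ 2 * D + 1 := by
      have a1 := hD y₁ (subset_closure hy₁)
      have a2 := hD y₂ (subset_closure hy₂)
      have := norm_sub_le y₂ y₁
      linarith
    rw [hk, div_le_iff₀ (by positivity)]
    exact h1.trans (mul_le_mul_of_nonneg_left h2 hc0)
  have hcpos : 0 < c := lt_of_lt_of_le hk0 hkc
  -- upper bound on c
  have hcK : c ≤ K := by
    obtain ⟨y, hy, hye⟩ := aux_upper hU hu hr (hball.trans hΩU)
      (fun y hy => (hspace y (subset_closure (hball hy))).le)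
    have hyΩ : y ∈ Ω := hball (Metric.ball_subset_closedBall hy)
    have h1 := heq y hyΩ
    have hs := hs₀b _ (hGcl y (subset_closure hyΩ))
    have hT : trOp (fderiv ℝ (gradient u) y) ≤ n * (3 / r) := by
      have : (n : ℝ) * (3 / r) = ∑ i : Fin n, 3 / r := by simp
      rw [this, trOp]
      refine Finset.sum_le_sum fun i _ => ?_
      have := hye (ev n i)
      rw [aux_ev_norm] at this
      simpa using this
    have h2 := aux_tr3 (hsym y (hΩU hyΩ)) (hpos y (subset_closure hyΩ)) (gradient u y)
    have h3 : c * ((1 - ‖gradient u y‖ ^ 2) * Real.sqrt (1 - ‖gradient u y‖ ^ 2))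
        ≤ n * (3 / r) := by linarith only [h1, h2, hT]
    have h4 : s₀ * Real.sqrt s₀ ≤
        (1 - ‖gradient u y‖ ^ 2) * Real.sqrt (1 - ‖gradient u y‖ ^ 2) :=
      mul_le_mul hs (Real.sqrt_le_sqrt hs) hsq₀.le (hs₀.le.trans hs)
    rw [hK, le_div_iff₀ (by positivity)]
    exact (mul_le_mul_of_nonneg_left h4 hc0).trans h3
  -- boundary values
  have hfront : ∀ y ∈ frontier Ω, y ∈ closure Ω ∧ g y = 0 := by
    intro y hy
    rw [hΩo.frontier_eq] at hy
    refine ⟨hy.1, le_antisymm ?_ ?_⟩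
    · by_contra hc
      push Not at hc
      apply hy.2
      rw [hΩeq]; exact hc
    · exact le_on_closure (s := Ω) (f := fun _ => (0:ℝ)) (g := g)
        (fun y hy => by rw [hΩeq] at hy; exact le_of_lt hy)
        continuousOn_const hgs.continuous.continuousOn hy.1
  have hinj : Set.InjOn (gradient u) (closure Ω) := by
    intro a ha b hb hab
    by_contra hne
    have hd : b - a ≠ 0 := fun h0 => hne (sub_eq_zero.mp h0).symm
    have hseg : ∀ t ∈ Set.Icc (0:ℝ) 1, a + t • (b - a) ∈ closure Ω := fun t ht =>
      hΩconv.closure.add_smul_sub_mem ha hb ht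
    have hder : ∀ t ∈ Set.Icc (0:ℝ) 1, HasDerivAt (fun t : ℝ => ⟪gradient u (a + t • (b - a)), b - a⟫)
        ⟪fderiv ℝ (gradient u) (a + t • (b - a)) (b - a), b - a⟫ t := by
      intro t ht
      have h1 := (aux_fd_line (hGd _ (hclU (hseg t ht)))).inner ℝ (hasDerivAt_const t (b - a))
      refine HasDerivAt.congr_deriv h1 ?_
      simp
    have hmono : StrictMonoOn (fun t : ℝ => ⟪gradient u (a + t • (b - a)), b - a⟫)
        (Set.Icc (0:ℝ) 1) := by
      apply strictMonoOn_of_deriv_pos (convex_Icc 0 1)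
      · exact fun t ht => (hder t ht).continuousAt.continuousWithinAt
      · intro t ht
        have ht' := interior_subset ht
        rw [(hder t ht').deriv, real_inner_comm]
        exact hposd _ (hseg t ht') _ hd
    have := hmono (by simp : (0:ℝ) ∈ Set.Icc (0:ℝ) 1) (by simp : (1:ℝ) ∈ Set.Icc (0:ℝ) 1) one_pos
    simp only [zero_smul, add_zero, one_smul, add_sub_cancel, hab] at this
    exact lt_irrefl _ this
  have hwfront : ∀ y ∈ frontier Ω, h (gradient u y) = 0 := by
    intro y hy
    have hycl := (hfront y hy).1
    refine le_antisymm ?_ ?_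
    · by_contra hc
      push Not at hc
      have hmem : gradient u y ∈ Ω' := by rw [hΩ'eq]; exact hc
      obtain ⟨y', hy', e⟩ := hbij.surjOn hmem
      have := hinj (subset_closure hy') hycl e
      rw [hΩo.frontier_eq] at hy
      exact hy.2 (this ▸ hy')
    · exact le_on_closure (s := Ω') (f := fun _ => (0:ℝ)) (g := h)
        (fun y hy => by rw [hΩ'eq] at hy; exact le_of_lt hy)
        continuousOn_const hhs.continuous.continuousOn (hGcl y hycl)
  -- the barrier
  have hbar : ∀ y ∈ closure Ω, 0 ≤ h (gradient u y) - ε * g y := by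
    have hcont : ContinuousOn (fun y => h (gradient u y) - ε * g y) (closure Ω) :=
      (hhs.continuous.comp_continuousOn (hGs.continuousOn.mono hclU)).sub
        (continuous_const.mul hgs.continuous).continuousOn
    obtain ⟨m, hm, hmin⟩ := hcl.exists_isMinOn ⟨z, subset_closure hz⟩ hcont
    have hmv : 0 ≤ h (gradient u m) - ε * g m := by
      by_cases hmΩ : m ∈ Ω
      · exfalso
        have hloc : IsLocalMin (fun y => h (gradient u y) - ε * g y) m :=
          (hmin.on_subset subset_closure).isLocalMin (hΩo.mem_nhds hmΩ)
        have := aux_key hn0 hU hu (hΩU hmΩ) hθ₂ hs₀ hε0 (hs₀b _ (hGcl m hm)) (hpos m hm)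
          hcpos hcK (by filter_upwards [hΩo.mem_nhds hmΩ] with y hy using heq y hy)
          hhconc hgs (hM₁ m hm) (hM₂ m hm) hloc
        have h2 : θ₂ * s₀ * (k ^ 2 * s₀ ^ 3) ≤ θ₂ * s₀ * (c ^ 2 * s₀ ^ 3) := by
          have := pow_le_pow_left₀ hk0.le hkc 2
          gcongr
        linarith
      · have hmf : m ∈ frontier Ω := by rw [hΩo.frontier_eq]; exact ⟨hm, hmΩ⟩
        rw [hwfront m hmf, (hfront m hmf).2]; simp
    intro y hy
    exact hmv.trans (hmin hy)
  -- the boundary point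
  have hx₀cl := (hfront x₀ hx₀).1
  have hx₀U := hclU hx₀cl
  obtain ⟨A, hA⟩ : ∃ A, A = fderiv ℝ (gradient u) x₀ := ⟨_, rfl⟩
  obtain ⟨b, hb⟩ : ∃ b, b = gradient h (gradient u x₀) := ⟨_, rfl⟩
  obtain ⟨ν, hν⟩ : ∃ ν, ν = gradient g x₀ := ⟨_, rfl⟩
  have hAsym : ∀ a b, ⟪A a, b⟫ = ⟪A b, a⟫ := by rw [hA]; exact hsym x₀ hx₀U
  have hApos : ∀ a, 0 ≤ ⟪a, A a⟫ := by rw [hA]; exact hpos x₀ hx₀cl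
  have hATr : trOp A ≤ K := by
    rw [hA]
    refine le_trans ?_ hcK
    refine le_on_closure (s := Ω) (f := fun y => trOp (fderiv ℝ (gradient u) y))
      (g := fun _ => c) htr_up ?_ continuousOn_const hx₀cl
    unfold trOp
    refine continuousOn_finsetSum _ fun i _ => ?_
    exact continuousOn_const.inner ((hAs.continuousOn.mono hclU).clm_apply continuousOn_const)
  have hgw : HasGradientAt (fun y => h (gradient u y) - ε * g y) (A b - ε • ν) x₀ := by
    have h1 : HasFDerivAt h (innerSL ℝ b) (gradient u x₀) := by
      rw [hb]
      exact aux_grad_fderiv (hhs.differentiable (by simp) _).hasGradientAt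
    have h2 := h1.comp x₀ (hGd x₀ hx₀U)
    have h3 : HasFDerivAt g (innerSL ℝ ν) x₀ := by
      rw [hν]
      exact aux_grad_fderiv (hgs.differentiable (by simp) _).hasGradientAt
    refine aux_of_fderiv (h2.sub (h3.const_mul ε)) ?_
    intro e
    rw [inner_sub_left, real_inner_smul_left, hAsym, real_inner_comm, hA]
    simp
  have hgν : HasGradientAt g ν x₀ := by
    rw [hν]; exact (hgs.differentiable (by simp) _).hasGradientAt
  have hνn : ‖ν‖ = 1 := by rw [hν]; exact hgn x₀ hx₀
  obtain ⟨l, hl, hle⟩ := aux_boundary hgw hgν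
    (by simp only [hwfront x₀ hx₀, (hfront x₀ hx₀).2]; simp) (hfront x₀ hx₀).2 hνn
    (fun y hy => hbar y (subset_closure (by rw [hΩeq]; exact hy)))
  have hAb : A b = (l + ε) • ν := by
    rw [add_smul, ← hle]; abel
  have hfin := aux_tr1 hAsym hApos b
  rw [hAb, norm_smul, hνn, mul_one, real_inner_smul_right, Real.norm_eq_abs, sq_abs] at hfin
  have hμ : 0 < l + ε := by linarith
  have hT0 := aux_tr_nonneg hApos
  have h5 : l + ε ≤ trOp A * ⟪b, ν⟫ := by
    have : (l + ε) * (l + ε) ≤ (l + ε) * (trOp A * ⟪b, ν⟫) := by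
      calc _ = (l + ε) ^ 2 := by ring
        _ ≤ _ := hfin
        _ = _ := by ring
    exact le_of_mul_le_mul_left this hμ
  rw [← hb, ← hν, one_div_div, div_le_iff₀ hK0]
  have hbν : 0 ≤ ⟪b, ν⟫ := by
    by_contra hc
    push Not at hc
    have := mul_nonpos_of_nonneg_of_nonpos hT0 hc.le
    linarith
  have := mul_le_mul_of_nonneg_right hATr hbν
  linarith
end
end

section
/- Let n ≥ 2, let Ω, Ω̃ ⊆ ℝⁿ be bounded, uniformly convex open domains with smooth boundary, with the closure of Ω̃ contained in the open unit ball B₁(0). Then there exists a constant C₁₇ > 0, depending only on n, Ω, Ω̃ and diam(Ω), such that for every strictly convex solution (u, c) of the second boundary value problem for the Lorentz mean curvature operator on (Ω, Ω̃), the Legendre transform ũ of u satisfies sup_{y ∈ Ω̃} ‖D²ũ(y)‖ ≤ max_{y ∈ ∂Ω̃} ‖D²ũ(y)‖ + C₁₇, where ‖·‖ is the operator norm of the Hessian matrix. -/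
noncomputable section
open MeasureTheory
open scoped RealInnerProductSpace

section aux
variable {E F : Type*} [NormedAddCommGroup E] [NormedSpace ℝ E]
  [NormedAddCommGroup F] [NormedSpace ℝ F]

/-- Directional derivative. -/
def Dd (q : E) (f : E → F) : E → F := fun y => fderiv ℝ f y q

theorem Dd_smooth {U : Set E} (hU : IsOpen U) {f : E → F} (hf : ContDiffOn ℝ (⊤ : ℕ∞) f U)
    (q : E) : ContDiffOn ℝ (⊤ : ℕ∞) (Dd q f) U := by
  have h1 : ContDiffOn ℝ (⊤ : ℕ∞) (fderiv ℝ f) U := hf.fderiv_of_isOpen hU (by simp)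
  exact h1.clm_apply contDiffOn_const

theorem sm_diffAt {U : Set E} (hU : IsOpen U) {f : E → F} (hf : ContDiffOn ℝ (⊤ : ℕ∞) f U)
    {y : E} (hy : y ∈ U) : DifferentiableAt ℝ f y :=
  (hf.contDiffAt (hU.mem_nhds hy)).differentiableAt (by simp)

theorem Dd_Dd {U : Set E} (hU : IsOpen U) {f : E → F} (hf : ContDiffOn ℝ (⊤ : ℕ∞) f U)
    {y : E} (hy : y ∈ U) (p q : E) : Dd p (Dd q f) y = fderiv ℝ (fderiv ℝ f) y p q := by
  have h1 : ContDiffOn ℝ (⊤ : ℕ∞) (fderiv ℝ f) U := hf.fderiv_of_isOpen hU (by simp)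
  have h2 := sm_diffAt hU h1 hy
  have := (h2.hasFDerivAt.clm_apply (hasFDerivAt_const q y)).fderiv
  unfold Dd
  rw [this]; simp

theorem Dd_comm {U : Set E} (hU : IsOpen U) {f : E → F} (hf : ContDiffOn ℝ (⊤ : ℕ∞) f U)
    (p q : E) : Set.EqOn (Dd p (Dd q f)) (Dd q (Dd p f)) U := by
  intro y hy
  rw [Dd_Dd hU hf hy, Dd_Dd hU hf hy]
  have := (hf.contDiffAt (hU.mem_nhds hy)).isSymmSndFDerivAt (by
    simp only [minSmoothness_of_isRCLikeNormedField]
    exact WithTop.coe_le_coe.2 (le_top : (2 : ℕ∞) ≤ ⊤))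
  exact this p q

theorem Dd_congr {U : Set E} (hU : IsOpen U) {f g : E → F} (h : Set.EqOn f g U) (q : E) :
    Set.EqOn (Dd q f) (Dd q g) U := by
  intro y hy
  have : f =ᶠ[nhds y] g := Filter.eventuallyEq_of_mem (hU.mem_nhds hy) h
  simp only [Dd]; rw [this.fderiv_eq]

theorem Dd_comm3 {U : Set E} (hU : IsOpen U) {f : E → F} (hf : ContDiffOn ℝ (⊤ : ℕ∞) f U)
    (p q : E) : Set.EqOn (Dd p (Dd q (Dd q f))) (Dd q (Dd q (Dd p f))) U :=
  (Dd_comm hU (Dd_smooth hU hf q) p q).trans (Dd_congr hU (Dd_comm hU hf p q) q)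

theorem Dd_comm4 {U : Set E} (hU : IsOpen U) {f : E → F} (hf : ContDiffOn ℝ (⊤ : ℕ∞) f U)
    (p q : E) : Set.EqOn (Dd p (Dd p (Dd q (Dd q f)))) (Dd q (Dd q (Dd p (Dd p f)))) U :=
  (Dd_congr hU (Dd_comm3 hU hf p q) p).trans (Dd_comm3 hU (Dd_smooth hU hf p) p q)

theorem Dd_line {U : Set E} (hU : IsOpen U) {f : E → F} (hf : ContDiffOn ℝ (⊤ : ℕ∞) f U)
    (y q : E) {t : ℝ} (hy : y + t • q ∈ U) :
    HasDerivAt (fun t : ℝ => f (y + t • q)) (Dd q f (y + t • q)) t := by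
  have h1 := (sm_diffAt hU hf hy).hasFDerivAt
  have h2 : HasDerivAt (fun t : ℝ => y + t • q) q t := by
    simpa using ((hasDerivAt_id t).smul_const q).const_add y
  exact h1.comp_hasDerivAt t h2

theorem line_mem {U : Set E} (hU : IsOpen U) {y : E} (hy : y ∈ U) (q : E) :
    ∀ᶠ t : ℝ in nhds 0, y + t • q ∈ U := by
  have : ContinuousAt (fun t : ℝ => y + t • q) 0 := by fun_prop
  exact this (hU.mem_nhds (by simpa using hy))

theorem max2 {g g' : ℝ → ℝ} {g'' : ℝ} (h1 : ∀ᶠ t in nhds 0, HasDerivAt g (g' t) t)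
    (h2 : HasDerivAt g' g'' 0) (hm : IsLocalMax g 0) : g'' ≤ 0 := by
  by_contra! hc
  have e1 : deriv g =ᶠ[nhds 0] g' := h1.mono fun t ht => ht.deriv
  have e2 : deriv (deriv g) 0 = g'' := by rw [e1.deriv_eq]; exact h2.deriv
  have hmin : IsLocalMin g 0 := isLocalMin_of_deriv_deriv_pos (by rw [e2]; exact hc)
    hm.deriv_eq_zero h1.self_of_nhds.continuousAt
  have e3 : g =ᶠ[nhds 0] fun _ => g 0 := by
    filter_upwards [hm, hmin] with t a b using le_antisymm a b
  have e4 : deriv g =ᶠ[nhds 0] fun _ => 0 := by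
    have := e3.deriv
    simpa using this
  have : deriv (deriv g) 0 = 0 := by rw [e4.deriv_eq]; simp
  linarith

theorem line_max {f : E → ℝ} {y : E} (h : IsLocalMax f y) (q : E) :
    IsLocalMax (fun t : ℝ => f (y + t • q)) 0 := by
  have hc : ContinuousAt (fun t : ℝ => y + t • q) 0 := by fun_prop
  have : Filter.Tendsto (fun t : ℝ => y + t • q) (nhds 0) (nhds y) := by
    simpa [ContinuousAt] using hc
  have := this.eventually h
  simpa [IsLocalMax, IsMaxFilter] using this

theorem bdd_aux {X G : Type*} [TopologicalSpace X] [NormedAddCommGroup G] {g : X → G} {S : Set X}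
    (hS : IsCompact S) (hg : ContinuousOn g S) : ∃ M : ℝ, ∀ y ∈ S, ‖g y‖ ≤ M :=
  hS.exists_bound_of_continuousOn hg

theorem bdd_DdDd {U : Set E} (hU : IsOpen U) {f : E → F} (hf : ContDiffOn ℝ (⊤ : ℕ∞) f U)
    {S : Set E} (hS : IsCompact S) (hSU : S ⊆ U) :
    ∃ M : ℝ, 0 ≤ M ∧ ∀ y ∈ S, ∀ q : E, ‖q‖ = 1 → ‖Dd q (Dd q f) y‖ ≤ M := by
  have h1 : ContDiffOn ℝ (⊤ : ℕ∞) (fderiv ℝ f) U := hf.fderiv_of_isOpen hU (by simp)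
  have h2 : ContDiffOn ℝ (⊤ : ℕ∞) (fderiv ℝ (fderiv ℝ f)) U := h1.fderiv_of_isOpen hU (by simp)
  obtain ⟨M, hM⟩ := bdd_aux hS (h2.continuousOn.mono hSU)
  refine ⟨max M 0, le_max_right _ _, fun y hy q hq => ?_⟩
  rw [Dd_Dd hU hf (hSU hy)]
  calc _ ≤ ‖fderiv ℝ (fderiv ℝ f) y‖ * ‖q‖ * ‖q‖ := ContinuousLinearMap.le_opNorm₂ _ _ _
    _ ≤ max M 0 := by rw [hq]; simp [hM y hy]

theorem convex_superlevel {h : E → ℝ} (hs : ContDiff ℝ (⊤ : ℕ∞) h)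
    (hc : ∀ p q : E, Dd q (Dd q h) p ≤ 0) : Convex ℝ {p | 0 < h p} := by
  have hs' : ContDiffOn ℝ (⊤ : ℕ∞) h Set.univ := hs.contDiffOn
  have key : ConcaveOn ℝ Set.univ h := by
    refine ⟨convex_univ, fun x _ y _ a b ha hb hab => ?_⟩
    have hcv : ConcaveOn ℝ Set.univ (fun t : ℝ => h (x + t • (y - x))) := by
      refine concaveOn_of_hasDerivWithinAt2_nonpos convex_univ
        (f' := fun t : ℝ => Dd (y - x) h (x + t • (y - x)))
        (f'' := fun t : ℝ => Dd (y - x) (Dd (y - x) h) (x + t • (y - x))) ?_ ?_ ?_ ?_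
      · have := hs.continuous
        fun_prop
      · exact fun t _ => (Dd_line isOpen_univ hs' x (y - x) trivial).hasDerivWithinAt
      · exact fun t _ => (Dd_line isOpen_univ (Dd_smooth isOpen_univ hs' _) x (y - x)
          trivial).hasDerivWithinAt
      · exact fun t _ => hc _ _
    have := hcv.2 (Set.mem_univ (0 : ℝ)) (Set.mem_univ (1 : ℝ)) ha hb hab
    have e : a • x + b • y = x + b • (y - x) := by
      have : a = 1 - b := by linarith
      rw [this]; module
    rw [e]
    simpa using this
  simpa using key.convex_gt 0
end aux

section aux2
variable {E : Type*} [NormedAddCommGroup E] [InnerProductSpace ℝ E] [CompleteSpace E]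

theorem inner_grad (f : E → ℝ) (y q : E) : ⟪gradient f y, q⟫ = Dd q f y := by
  simp [gradient, Dd]

theorem grad_smooth {U : Set E} (hU : IsOpen U) {f : E → ℝ} (hf : ContDiffOn ℝ (⊤ : ℕ∞) f U) :
    ContDiffOn ℝ (⊤ : ℕ∞) (gradient f) U := by
  have h1 : ContDiffOn ℝ (⊤ : ℕ∞) (fderiv ℝ f) U := hf.fderiv_of_isOpen hU (by simp)
  exact (InnerProductSpace.toDual ℝ E).symm.contDiff.comp_contDiffOn h1

theorem inner_hess {U : Set E} (hU : IsOpen U) {f : E → ℝ} (hf : ContDiffOn ℝ (⊤ : ℕ∞) f U)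
    {y : E} (hy : y ∈ U) (p q : E) :
    ⟪fderiv ℝ (gradient f) y p, q⟫ = Dd p (Dd q f) y := by
  have h1 := (sm_diffAt hU (grad_smooth hU hf) hy).hasFDerivAt
  have h2 := (h1.inner ℝ (hasFDerivAt_const q y)).fderiv
  have : (fun x => ⟪gradient f x, q⟫) = Dd q f := funext fun x => inner_grad f x q
  rw [this] at h2
  rw [Dd, h2]
  simp [real_inner_comm]

theorem opnorm_le (W : E →L[ℝ] E) (hsym : ∀ x y, ⟪W x, y⟫ = ⟪x, W y⟫)
    (hpos : ∀ x, 0 ≤ ⟪x, W x⟫) {R : ℝ} (hR : 0 ≤ R) (hb : ∀ x, ‖x‖ = 1 → ⟪x, W x⟫ ≤ R) : ‖W‖ ≤ R := by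
  have hb' : ∀ x, ⟪x, W x⟫ ≤ R * ‖x‖ ^ 2 := by
    intro x
    by_cases hx : x = 0
    · simp [hx]
    have hx' : ‖x‖ ≠ 0 := by simpa using hx
    have := hb (‖x‖⁻¹ • x) (by rw [norm_smul]; simp [hx'])
    simp only [map_smul, inner_smul_left, inner_smul_right] at this
    simp at this
    field_simp at this
    linarith
  have h1 : ∀ x y, ‖x‖ = 1 → ‖y‖ = 1 → ⟪W x, y⟫ ≤ R := by
    intro x y hx hy
    have a := hb' (x + y)
    have b := hpos (x - y)
    have c : ‖x + y‖ ^ 2 ≤ 4 := by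
      have := norm_add_le x y
      rw [hx, hy] at this
      nlinarith [norm_nonneg (x + y)]
    have d : R * ‖x + y‖ ^ 2 ≤ R * 4 := by gcongr
    simp only [map_add, map_sub, inner_add_left, inner_add_right, inner_sub_left,
      inner_sub_right] at a b
    have e1 := hsym x y
    have e2 : ⟪y, W x⟫ = ⟪W x, y⟫ := real_inner_comm _ _
    linarith
  refine W.opNorm_le_bound hR fun x => ?_
  by_cases hx : x = 0
  · simp [hx]
  by_cases hWx : W x = 0
  · rw [hWx]; simp; positivity
  have hx' : 0 < ‖x‖ := by simpa using hx
  have hw' : 0 < ‖W x‖ := by simpa using hWx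
  have := h1 (‖x‖⁻¹ • x) (‖W x‖⁻¹ • W x) (by rw [norm_smul]; simp [hx'.ne'])
    (by rw [norm_smul]; simp [hw'.ne'])
  simp only [map_smul, inner_smul_left, inner_smul_right, real_inner_self_eq_norm_sq] at this
  simp at this
  field_simp at this
  linarith
end aux2
section aux3
variable {n : ℕ}

/-- `v^{-1/2}`. -/
def aF (n : ℕ) (p : EuclideanSpace ℝ (Fin n)) : ℝ := (√(√(1 - ‖p‖ ^ 2)))⁻¹

/-- Vectors with `∑ ⟨b, A b⟩ = tr (s A)`. -/
def bF (n : ℕ) : Option (Fin n) → EuclideanSpace ℝ (Fin n) → EuclideanSpace ℝ (Fin n)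
  | none, p => (aF n p) ^ 3 • p
  | some i, p => aF n p • ev n i

theorem one_sub_pos {p : EuclideanSpace ℝ (Fin n)} (hp : ‖p‖ < 1) : 0 < 1 - ‖p‖ ^ 2 := by
  nlinarith [norm_nonneg p]

theorem aF_smooth : ContDiffOn ℝ (⊤ : ℕ∞) (aF n) (Metric.ball 0 1) := by
  intro p hp
  have hp' := one_sub_pos (by simpa using hp : ‖p‖ < 1)
  apply ContDiffAt.contDiffWithinAt
  unfold aF
  have h0 : ContDiffAt ℝ (⊤ : ℕ∞) (fun p : EuclideanSpace ℝ (Fin n) => 1 - ‖p‖ ^ 2) p :=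
    contDiffAt_const.sub (contDiff_norm_sq ℝ).contDiffAt
  exact ((h0.sqrt hp'.ne').sqrt (Real.sqrt_pos.2 hp').ne').inv
    (Real.sqrt_pos.2 (Real.sqrt_pos.2 hp')).ne'

theorem bF_smooth (k : Option (Fin n)) : ContDiffOn ℝ (⊤ : ℕ∞) (bF n k) (Metric.ball 0 1) := by
  cases k with
  | none => exact (aF_smooth.pow 3).smul contDiffOn_id
  | some i => exact aF_smooth.smul contDiffOn_const

theorem one_le_aF {p : EuclideanSpace ℝ (Fin n)} (hp : ‖p‖ < 1) : 1 ≤ aF n p := by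
  have hp' := one_sub_pos hp
  have h1 : 1 - ‖p‖ ^ 2 ≤ 1 := by nlinarith [norm_nonneg p]
  refine (one_le_inv₀ (Real.sqrt_pos.2 (Real.sqrt_pos.2 hp'))).2 ?_
  rw [Real.sqrt_le_one, Real.sqrt_le_one]
  exact h1

theorem aF_sq {p : EuclideanSpace ℝ (Fin n)} : aF n p ^ 2 = (√(1 - ‖p‖ ^ 2))⁻¹ := by
  rw [aF, inv_pow, Real.sq_sqrt (Real.sqrt_nonneg _)]

theorem ev_sum (z : EuclideanSpace ℝ (Fin n)) : z = ∑ i, z i • ev n i := by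
  ext j
  simp [ev, Finset.sum_apply, Pi.single_apply]

theorem inner_ev (z : EuclideanSpace ℝ (Fin n)) (i : Fin n) : ⟪z, ev n i⟫ = z i := by
  simp [ev, EuclideanSpace.inner_single_right]

theorem psd_le (A : EuclideanSpace ℝ (Fin n) →L[ℝ] EuclideanSpace ℝ (Fin n))
    (hA : ∀ z, 0 ≤ ⟪z, A z⟫) (z : EuclideanSpace ℝ (Fin n)) :
    ⟪z, A z⟫ ≤ n * ‖z‖ ^ 2 * ∑ i, ⟪ev n i, A (ev n i)⟫ := by
  set x : Fin n → EuclideanSpace ℝ (Fin n) := fun i => z i • ev n i with hx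
  have hz : z = ∑ i, x i := ev_sum z
  have h1 : 0 ≤ ∑ i, ∑ j, ⟪x i - x j, A (x i - x j)⟫ :=
    Finset.sum_nonneg fun i _ => Finset.sum_nonneg fun j _ => hA _
  have h2 : ⟪z, A z⟫ = ∑ i, ∑ j, ⟪x i, A (x j)⟫ := by
    conv_lhs => rw [hz]
    simp only [map_sum, sum_inner, inner_sum]
    rw [Finset.sum_comm]
  have h2' : ⟪z, A z⟫ = ∑ i, ∑ j, ⟪x j, A (x i)⟫ := by rw [h2, Finset.sum_comm]
  have h3 : ∑ i, ∑ j, ⟪x i - x j, A (x i - x j)⟫ =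
      2 * (n * ∑ i, ⟪x i, A (x i)⟫) - 2 * ⟪z, A z⟫ := by
    have e : 2 * ⟪z, A z⟫ = (∑ i, ∑ j, ⟪x i, A (x j)⟫) + ∑ i, ∑ j, ⟪x j, A (x i)⟫ := by
      rw [← h2, ← h2']; ring
    rw [e]
    simp only [map_sub, inner_sub_left, inner_sub_right, Finset.sum_sub_distrib,
      Finset.sum_const, Finset.card_univ, Fintype.card_fin, nsmul_eq_mul, ← Finset.mul_sum]
    ring
  have h4 : ∑ i, ⟪x i, A (x i)⟫ ≤ ∑ i, ‖z‖ ^ 2 * ⟪ev n i, A (ev n i)⟫ := by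
    refine Finset.sum_le_sum fun i _ => ?_
    have : ⟪x i, A (x i)⟫ = z i ^ 2 * ⟪ev n i, A (ev n i)⟫ := by
      simp only [hx, map_smul, inner_smul_left, inner_smul_right]
      simp; ring
    rw [this]
    have hzi : z i ^ 2 ≤ ‖z‖ ^ 2 := by
      rw [← sq_abs, ← Real.norm_eq_abs]
      gcongr
      exact PiLp.norm_apply_le z i
    exact mul_le_mul_of_nonneg_right hzi (hA _)
  rw [← Finset.mul_sum] at h4
  have h5 : (n : ℝ) * ∑ i, ⟪x i, A (x i)⟫ ≤ n * (‖z‖ ^ 2 * ∑ i, ⟪ev n i, A (ev n i)⟫) := by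
    gcongr
  linarith

theorem MOp_eq {U : Set (EuclideanSpace ℝ (Fin n))} (hU : IsOpen U)
    {u : EuclideanSpace ℝ (Fin n) → ℝ} (hu : ContDiffOn ℝ (⊤ : ℕ∞) u U)
    {x : EuclideanSpace ℝ (Fin n)} (hx : x ∈ U) (h1 : ‖gradient u x‖ < 1) :
    MOp n u x = ∑ k, ⟪bF n k (gradient u x),
      fderiv ℝ (gradient u) x (bF n k (gradient u x))⟫ := by
  set A := fderiv ℝ (gradient u) x with hA
  set p := gradient u x with hp
  have hpos := one_sub_pos h1
  have hAd : HasFDerivAt (gradient u) A x := (sm_diffAt hU (grad_smooth hU hu) hx).hasFDerivAt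
  have hv : √(1 - ‖p‖ ^ 2) ≠ 0 := (Real.sqrt_pos.2 hpos).ne'
  have key : ∀ i, fderiv ℝ (fun y => fderiv ℝ u y (ev n i) / √(1 - ‖gradient u y‖ ^ 2)) x (ev n i)
      = (√(1 - ‖p‖ ^ 2))⁻¹ * ⟪ev n i, A (ev n i)⟫ +
        (√(1 - ‖p‖ ^ 2))⁻¹ ^ 3 * (p i * ⟪p, A (ev n i)⟫) := by
    intro i
    have e : (fun y => fderiv ℝ u y (ev n i) / √(1 - ‖gradient u y‖ ^ 2)) =
        fun y => ⟪gradient u y, ev n i⟫ / √(1 - ‖gradient u y‖ ^ 2) := by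
      funext y; rw [inner_grad]; rfl
    rw [e]
    have hl : HasDerivAt (fun t : ℝ => gradient u (x + t • ev n i)) (A (ev n i)) 0 := by
      have h2 : HasDerivAt (fun t : ℝ => x + t • ev n i) (ev n i) 0 := by
        simpa using ((hasDerivAt_id (0:ℝ)).smul_const (ev n i)).const_add x
      have h3 : HasFDerivAt (gradient u) A (x + (0:ℝ) • ev n i) := by simpa using hAd
      exact h3.comp_hasDerivAt 0 h2
    have hn := hl.norm_sq
    have hs := (hn.const_sub 1).sqrt (by simpa [← hp] using hpos.ne')
    have hi := hl.inner ℝ (hasDerivAt_const (0:ℝ) (ev n i))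
    have hd := hi.div hs (by simpa [← hp] using hv)
    have hdiff : DifferentiableAt ℝ
        (fun y => ⟪gradient u y, ev n i⟫ / √(1 - ‖gradient u y‖ ^ 2)) x := by
      have hg := hAd.differentiableAt
      have g1 : DifferentiableAt ℝ (fun y => ⟪gradient u y, ev n i⟫) x :=
        hg.inner ℝ (differentiableAt_const _)
      have g2 : DifferentiableAt ℝ (fun y => 1 - ‖gradient u y‖ ^ 2) x :=
        (differentiableAt_const _).sub (hg.norm_sq ℝ)
      have g3 : DifferentiableAt ℝ (fun y => √(1 - ‖gradient u y‖ ^ 2)) x :=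
        g2.sqrt hpos.ne'
      have g4 := g1.mul (g3.inv hv)
      exact g4
    have hc : HasDerivAt (fun t : ℝ => (fun y => ⟪gradient u y, ev n i⟫ /
        √(1 - ‖gradient u y‖ ^ 2)) (x + t • ev n i)) (fderiv ℝ (fun y => ⟪gradient u y, ev n i⟫ /
        √(1 - ‖gradient u y‖ ^ 2)) x (ev n i)) 0 := by
      have h2 : HasDerivAt (fun t : ℝ => x + t • ev n i) (ev n i) 0 := by
        simpa using ((hasDerivAt_id (0:ℝ)).smul_const (ev n i)).const_add x
      have h3 := hdiff.hasFDerivAt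
      have h4 : x = x + (0:ℝ) • ev n i := by simp
      rw [h4] at h3
      have := h3.comp_hasDerivAt 0 h2
      rw [← h4] at this
      exact this
    rw [hc.unique hd]
    simp only [zero_smul, add_zero, ← hp, inner_ev, inner_zero_right, zero_add]
    rw [real_inner_comm (A (ev n i)) (ev n i), inner_ev]
    field_simp
    ring
  rw [MOp, Finset.sum_congr rfl fun i _ => key i, Fintype.sum_option, Finset.sum_add_distrib,
    ← Finset.mul_sum, ← Finset.mul_sum]
  have e1 : ∑ i, p i * ⟪p, A (ev n i)⟫ = ⟪p, A p⟫ := by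
    have : A p = ∑ i, p i • A (ev n i) := by
      conv_lhs => rw [ev_sum p]
      simp [map_sum]
    rw [this, inner_sum]
    simp [inner_smul_right]
  rw [e1, add_comm]
  congr 1
  · simp only [bF, map_smul, inner_smul_left, inner_smul_right]
    rw [← aF_sq]; simp; ring
  · rw [Finset.mul_sum]
    refine Finset.sum_congr rfl fun i _ => ?_
    simp only [bF, map_smul, inner_smul_left, inner_smul_right]
    rw [← aF_sq]; simp; ring
end aux3

theorem key12 {n : ℕ} (hn : 2 ≤ n) {V : Set (EuclideanSpace ℝ (Fin n))} (hV : IsOpen V)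
    (hVb : V ⊆ Metric.ball 0 1) {f : EuclideanSpace ℝ (Fin n) → ℝ}
    (hf : ContDiffOn ℝ (⊤ : ℕ∞) f V)
    (A : EuclideanSpace ℝ (Fin n) → EuclideanSpace ℝ (Fin n) →L[ℝ] EuclideanSpace ℝ (Fin n))
    (hWA : ∀ y ∈ V, ∀ z, fderiv ℝ (gradient f) y (A y z) = z)
    (hAW : ∀ y ∈ V, ∀ z, A y (fderiv ℝ (gradient f) y z) = z)
    (hA : ∀ y ∈ V, ∀ z, z ≠ 0 → 0 < ⟪z, A y z⟫) {c : ℝ}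
    (hc : ∀ y ∈ V, ∑ k, ⟪bF n k y, A y (bF n k y)⟫ = c)
    {y₀ ξ : EuclideanSpace ℝ (Fin n)} (hy₀ : y₀ ∈ V) {M K : ℝ}
    (hM : ∀ k, ‖Dd ξ (Dd ξ (bF n k)) y₀‖ ≤ M) (hK : K = (n + 1) * (n * M ^ 2) + 2)
    (hmax : IsLocalMax (fun y => Dd ξ (Dd ξ f) y + K * f y) y₀) : False := by
  have hA0 : ∀ y ∈ V, ∀ z, 0 ≤ ⟪z, A y z⟫ := by
    intro y hy z
    by_cases hz : z = 0
    · simp [hz]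
    · exact (hA y hy z hz).le
  have hWsym : ∀ y ∈ V, ∀ p q, ⟪fderiv ℝ (gradient f) y p, q⟫ = ⟪p, fderiv ℝ (gradient f) y q⟫ := by
    intro y hy p q
    rw [real_inner_comm _ p, inner_hess hV hf hy, inner_hess hV hf hy, Dd_comm hV hf p q hy]
  have hAsym : ∀ y ∈ V, ∀ p q, ⟪A y p, q⟫ = ⟪p, A y q⟫ := by
    intro y hy p q
    have := hWsym y hy (A y p) (A y q)
    rw [hWA y hy, hWA y hy] at this
    exact this.symm
  have hWpos : ∀ y ∈ V, ∀ z, 0 ≤ ⟪z, fderiv ℝ (gradient f) y z⟫ := by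
    intro y hy z
    have := hA0 y hy (fderiv ℝ (gradient f) y z)
    rw [hAW y hy, real_inner_comm] at this
    exact this
  -- dual inequality
  have hdual : ∀ y ∈ V, ∀ b q, 2 * ⟪q, b⟫ - Dd q (Dd q f) y ≤ ⟪b, A y b⟫ := by
    intro y hy b q
    have h1 := hWpos y hy (q - A y b)
    rw [← inner_hess hV hf hy]
    simp only [map_sub, inner_sub_left, inner_sub_right, hWA y hy] at h1
    rw [← hWsym y hy q q, ← hWsym y hy (A y b) q, hWA y hy] at h1
    have e1 : ⟪b, q⟫ = ⟪q, b⟫ := real_inner_comm _ _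
    have e2 : ⟪b, A y b⟫ = ⟪A y b, b⟫ := real_inner_comm _ _
    linarith
  set q : Option (Fin n) → EuclideanSpace ℝ (Fin n) := fun k => A y₀ (bF n k y₀) with hq
  have hqW : ∀ k, Dd (q k) (Dd (q k) f) y₀ = ⟪bF n k y₀, A y₀ (bF n k y₀)⟫ := by
    intro k
    rw [← inner_hess hV hf hy₀, hq]
    simp only
    rw [hWA y₀ hy₀]
  -- the touching function
  have hH : IsLocalMax (fun y => ∑ k, (2 * ⟪q k, bF n k y⟫ - Dd (q k) (Dd (q k) f) y)) y₀ := by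
    filter_upwards [hV.mem_nhds hy₀] with y hy
    calc _ ≤ ∑ k, ⟪bF n k y, A y (bF n k y)⟫ := Finset.sum_le_sum fun k _ => hdual y hy _ _
      _ = c := hc y hy
      _ = ∑ k, ⟪bF n k y₀, A y₀ (bF n k y₀)⟫ := (hc y₀ hy₀).symm
      _ = _ := Finset.sum_congr rfl fun k _ => by
        rw [hqW, hq]; simp only; rw [real_inner_comm]; ring
  have hbs : ∀ k, ContDiffOn ℝ (⊤ : ℕ∞) (bF n k) V := fun k => (bF_smooth k).mono hVb
  have hfs : ∀ k, ContDiffOn ℝ (⊤ : ℕ∞) (Dd (q k) (Dd (q k) f)) V := fun k =>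
    Dd_smooth hV (Dd_smooth hV hf _) _
  have hD1 : ∑ k, (2 * ⟪q k, Dd ξ (Dd ξ (bF n k)) y₀⟫ -
      Dd ξ (Dd ξ (Dd (q k) (Dd (q k) f))) y₀) ≤ 0 := by
    refine max2 (g := fun t : ℝ => ∑ k, (2 * ⟪q k, bF n k (y₀ + t • ξ)⟫ -
        Dd (q k) (Dd (q k) f) (y₀ + t • ξ)))
      (g' := fun t : ℝ => ∑ k, (2 * ⟪q k, Dd ξ (bF n k) (y₀ + t • ξ)⟫ -
        Dd ξ (Dd (q k) (Dd (q k) f)) (y₀ + t • ξ))) ?_ ?_ (line_max hH ξ)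
    · filter_upwards [line_mem hV hy₀ ξ] with t ht
      refine HasDerivAt.fun_sum fun k _ => ?_
      have h1 := ((hasDerivAt_const t (q k)).inner ℝ (Dd_line hV (hbs k) y₀ ξ ht)).const_mul 2
      have h2 := h1.fun_sub (Dd_line hV (hfs k) y₀ ξ ht)
      simpa using h2
    · have h0 : y₀ + (0 : ℝ) • ξ ∈ V := by simpa using hy₀
      refine HasDerivAt.fun_sum fun k _ => ?_
      have h1 := ((hasDerivAt_const (0:ℝ) (q k)).inner ℝ
        (Dd_line hV (Dd_smooth hV (hbs k) ξ) y₀ ξ h0)).const_mul 2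
      have h2 := h1.fun_sub (Dd_line hV (Dd_smooth hV (hfs k) ξ) y₀ ξ h0)
      simpa using h2
  have hD2 : ∀ p, Dd p (Dd p (Dd ξ (Dd ξ f))) y₀ + K * Dd p (Dd p f) y₀ ≤ 0 := by
    intro p
    have hξ : ContDiffOn ℝ (⊤ : ℕ∞) (Dd ξ (Dd ξ f)) V := Dd_smooth hV (Dd_smooth hV hf _) _
    refine max2 (g := fun t : ℝ => Dd ξ (Dd ξ f) (y₀ + t • p) + K * f (y₀ + t • p))
      (g' := fun t : ℝ => Dd p (Dd ξ (Dd ξ f)) (y₀ + t • p) + K * Dd p f (y₀ + t • p))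
      ?_ ?_ (line_max hmax p)
    · filter_upwards [line_mem hV hy₀ p] with t ht
      exact (Dd_line hV hξ y₀ p ht).fun_add ((Dd_line hV hf y₀ p ht).const_mul K)
    · have h0 : y₀ + (0 : ℝ) • p ∈ V := by simpa using hy₀
      have := (Dd_line hV (Dd_smooth hV hξ p) y₀ p h0).fun_add
        ((Dd_line hV (Dd_smooth hV hf p) y₀ p h0).const_mul K)
      simpa using this
  set T := ∑ i, ⟪ev n i, A y₀ (ev n i)⟫ with hT
  have hTc : T ≤ c := by
    rw [← hc y₀ hy₀, Fintype.sum_option]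
    have h1 := hA0 y₀ hy₀ (bF n none y₀)
    have h2 : T ≤ ∑ i, ⟪bF n (some i) y₀, A y₀ (bF n (some i) y₀)⟫ := by
      refine Finset.sum_le_sum fun i _ => ?_
      simp only [bF, map_smul, inner_smul_left, inner_smul_right]
      have ha := one_le_aF (n := n) (p := y₀) (by simpa using hVb hy₀)
      have hp := hA0 y₀ hy₀ (ev n i)
      simp
      nlinarith [mul_nonneg (by nlinarith : 0 ≤ aF n y₀ * aF n y₀ - 1) hp]
    linarith
  have hTpos : 0 < T := by
    refine Finset.sum_pos (fun i _ => hA y₀ hy₀ _ ?_) ⟨⟨0, by omega⟩, Finset.mem_univ _⟩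
    simp [ev]
  have hterm : ∀ k, K * ⟪bF n k y₀, A y₀ (bF n k y₀)⟫ - ⟪bF n k y₀, A y₀ (bF n k y₀)⟫
      - n * M ^ 2 * T ≤
      2 * ⟪q k, Dd ξ (Dd ξ (bF n k)) y₀⟫ - Dd ξ (Dd ξ (Dd (q k) (Dd (q k) f))) y₀ := by
    intro k
    have h1 := hD2 (q k)
    rw [hqW, ← Dd_comm4 hV hf ξ (q k) hy₀] at h1
    set d := Dd ξ (Dd ξ (bF n k)) y₀ with hd
    have h2 := hA0 y₀ hy₀ (bF n k y₀ + d)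
    have h3 := psd_le (A y₀) (hA0 y₀ hy₀) d
    have h4 : (n : ℝ) * ‖d‖ ^ 2 * T ≤ n * M ^ 2 * T := by
      have := hM k
      gcongr
    simp only [map_add, inner_add_left, inner_add_right] at h2
    have h5 := hAsym y₀ hy₀ (bF n k y₀) d
    have h6 : ⟪d, A y₀ (bF n k y₀)⟫ = ⟪A y₀ (bF n k y₀), d⟫ := real_inner_comm _ _
    have h7 : ⟪q k, d⟫ = ⟪A y₀ (bF n k y₀), d⟫ := rfl
    linarith
  have hfin := (Finset.sum_le_sum fun k (_ : k ∈ Finset.univ) => hterm k).trans hD1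
  rw [Finset.sum_sub_distrib, Finset.sum_sub_distrib, ← Finset.mul_sum, hc y₀ hy₀] at hfin
  simp only [Finset.sum_const, Finset.card_univ, Fintype.card_option, Fintype.card_fin,
    nsmul_eq_mul] at hfin
  push_cast at hfin
  rw [hK] at hfin
  have h8 : ((n : ℝ) + 1) * (n * M ^ 2) * T ≤ (n + 1) * (n * M ^ 2) * c := by gcongr
  nlinarith

/-- Lemma 4.2.  The interior bound on the Hessian of the Legendre
transform reduces to the boundary:  `sup_{Ω̃} ‖D²ũ‖ ≤ max_{∂Ω̃} ‖D²ũ‖ + C₁₇`. -/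
theorem statement12 (n : ℕ) (hn : 2 ≤ n) (Ω Ω' : Set (EuclideanSpace ℝ (Fin n)))
    (g h : EuclideanSpace ℝ (Fin n) → ℝ) (θ₁ θ₂ : ℝ)
    (hΩb : Bornology.IsBounded Ω) (hΩ'b : Bornology.IsBounded Ω')
    (hΩ : IsUnifConvexDefFn n Ω g θ₁) (hΩ' : IsUnifConvexDefFn n Ω' h θ₂)
    (hsub : closure Ω' ⊆ Metric.ball (0 : EuclideanSpace ℝ (Fin n)) 1) :
    ∃ C₁₇ : ℝ, 0 < C₁₇ ∧
      ∀ (u ut : EuclideanSpace ℝ (Fin n) → ℝ) (c : ℝ),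
        IsSol n Ω Ω' u c → IsLegendre n Ω Ω' u ut →
        ∀ y ∈ Ω', ‖fderiv ℝ (gradient ut) y‖ ≤
          sSup ((fun z => ‖fderiv ℝ (gradient ut) z‖) '' frontier Ω') + C₁₇ := by
  obtain ⟨hhs, hΩ'eq, -, hθ, hhess⟩ := hΩ'
  have hΩ'o : IsOpen Ω' := by
    rw [hΩ'eq]; exact isOpen_lt continuous_const hhs.continuous
  have hΩo : IsOpen Ω := by
    rw [hΩ.2.1]; exact isOpen_lt continuous_const hΩ.1.continuous
  have hconv : Convex ℝ Ω' := by
    rw [hΩ'eq]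
    refine convex_superlevel hhs fun p q => ?_
    rw [← inner_hess isOpen_univ hhs.contDiffOn (Set.mem_univ p), real_inner_comm]
    exact (hhess p q).trans (by nlinarith [sq_nonneg ‖q‖])
  have hcpt : IsCompact (closure Ω') := hΩ'b.isCompact_closure
  have hMk : ∀ k, ∃ M : ℝ, 0 ≤ M ∧ ∀ y ∈ closure Ω', ∀ q : EuclideanSpace ℝ (Fin n), ‖q‖ = 1 →
      ‖Dd q (Dd q (bF n k)) y‖ ≤ M := fun k =>
    bdd_DdDd Metric.isOpen_ball (bF_smooth k) hcpt hsub
  choose Mk hMk0 hMk using hMk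
  set M := ∑ k, Mk k with hMdef
  have hMle : ∀ k, Mk k ≤ M := fun k =>
    Finset.single_le_sum (fun i _ => hMk0 i) (Finset.mem_univ k)
  set K : ℝ := (n + 1) * (n * M ^ 2) + 2 with hK
  have hKpos : 0 < K := by positivity
  obtain ⟨R, hR⟩ := hΩb.exists_norm_le
  have hR' : ∀ x ∈ Ω, ‖x‖ ≤ |R| := fun x hx => (hR x hx).trans (le_abs_self R)
  refine ⟨K * (|R| * 2) + 1, by positivity, ?_⟩
  intro u ut c hsol hleg y hy
  obtain ⟨⟨U, hUo, hUs, hu⟩, hsp, hpd, hbij, hMc⟩ := hsol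
  obtain ⟨⟨V, hVo, hVs, hv⟩, -, hgr⟩ := hleg
  have hvΩ : ContDiffOn ℝ (⊤ : ℕ∞) ut Ω' := hv.mono (subset_closure.trans hVs)
  have huΩ : ContDiffOn ℝ (⊤ : ℕ∞) u Ω := hu.mono (subset_closure.trans hUs)
  have hgm : ∀ z ∈ Ω', gradient ut z ∈ Ω ∧ gradient u (gradient ut z) = z := by
    intro z hz
    obtain ⟨x, hx, rfl⟩ := hbij.surjOn hz
    rw [hgr x hx]; exact ⟨hx, rfl⟩
  set A : EuclideanSpace ℝ (Fin n) → EuclideanSpace ℝ (Fin n) →L[ℝ] EuclideanSpace ℝ (Fin n) :=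
    fun z => fderiv ℝ (gradient u) (gradient ut z) with hAdef
  have hdu : ∀ z ∈ Ω', HasFDerivAt (gradient u) (A z) (gradient ut z) := fun z hz =>
    (sm_diffAt hΩo (grad_smooth hΩo huΩ) (hgm z hz).1).hasFDerivAt
  have hdv : ∀ z ∈ Ω', HasFDerivAt (gradient ut) (fderiv ℝ (gradient ut) z) z := fun z hz =>
    (sm_diffAt hΩ'o (grad_smooth hΩ'o hvΩ) hz).hasFDerivAt
  have hAW : ∀ z ∈ Ω', ∀ p, A z (fderiv ℝ (gradient ut) z p) = p := by
    intro z hz p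
    have h1 := (hdu z hz).comp z (hdv z hz)
    have h2 : HasFDerivAt (gradient u ∘ gradient ut) (ContinuousLinearMap.id ℝ _) z :=
      (hasFDerivAt_id z).congr_of_eventuallyEq
        (Filter.eventuallyEq_of_mem (hΩ'o.mem_nhds hz) fun w hw => (hgm w hw).2)
    exact DFunLike.congr_fun (h1.unique h2) p
  have hWA : ∀ z ∈ Ω', ∀ p, fderiv ℝ (gradient ut) z (A z p) = p := by
    intro z hz p
    have h3 := hdv z hz
    have h4 : HasFDerivAt (gradient ut) (fderiv ℝ (gradient ut) z)
        (gradient u (gradient ut z)) := by rw [(hgm z hz).2]; exact h3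
    have h1 := h4.comp (gradient ut z) (hdu z hz)
    have h2 : HasFDerivAt (gradient ut ∘ gradient u) (ContinuousLinearMap.id ℝ _)
        (gradient ut z) :=
      (hasFDerivAt_id _).congr_of_eventuallyEq
        (Filter.eventuallyEq_of_mem (hΩo.mem_nhds (hgm z hz).1) fun w hw => hgr w hw)
    exact DFunLike.congr_fun (h1.unique h2) p
  have hApos : ∀ z ∈ Ω', ∀ p, p ≠ 0 → 0 < ⟪p, A z p⟫ := fun z hz p hp =>
    hpd _ (subset_closure (hgm z hz).1) p hp
  have hceq : ∀ z ∈ Ω', ∑ k, ⟪bF n k z, A z (bF n k z)⟫ = c := by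
    intro z hz
    have h1 := hgm z hz
    have h2 := MOp_eq hΩo huΩ h1.1 (hsp _ (subset_closure h1.1))
    rw [hMc _ h1.1, h1.2] at h2
    exact h2.symm
  -- boundary values are bounded
  have hgv := grad_smooth hVo hv
  have hcW : ContinuousOn (fun z => ‖fderiv ℝ (gradient ut) z‖) (frontier Ω') := by
    have h1 : ContDiffOn ℝ (⊤ : ℕ∞) (fderiv ℝ (gradient ut)) V :=
      hgv.fderiv_of_isOpen hVo (by simp)
    have := h1.continuousOn.mono (frontier_subset_closure.trans hVs)
    fun_prop
  have hfc : IsCompact (frontier Ω') :=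
    hcpt.of_isClosed_subset isClosed_frontier frontier_subset_closure
  have hbdd : BddAbove ((fun z => ‖fderiv ℝ (gradient ut) z‖) '' frontier Ω') :=
    hfc.bddAbove_image hcW
  set S := sSup ((fun z => ‖fderiv ℝ (gradient ut) z‖) '' frontier Ω') with hS
  have hS0 : 0 ≤ S := Real.sSup_nonneg (by rintro _ ⟨z, -, rfl⟩; exact norm_nonneg _)
  -- oscillation of `ut`
  have hgb : ∀ z ∈ closure Ω', ‖fderiv ℝ ut z‖ ≤ |R| := by
    have h1 : ContinuousOn (fderiv ℝ ut) V :=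
      (hv.fderiv_of_isOpen (m := (⊤ : ℕ∞)) hVo (by simp)).continuousOn
    have h2 : ContinuousOn (fun z => ‖fderiv ℝ ut z‖) (closure Ω') := by
      have := h1.mono hVs
      fun_prop
    intro z hz
    refine le_on_closure (s := Ω') (g := fun _ => |R|) (fun w hw => ?_) h2 continuousOn_const hz
    have := hR' _ (hgm w hw).1
    rw [gradient, LinearIsometryEquiv.norm_map] at this
    exact this
  have hosc : ∀ z ∈ closure Ω', ut z - ut y ≤ |R| * 2 := by
    intro z hz
    have h1 := hconv.closure.norm_image_sub_le_of_norm_fderiv_le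
      (fun w hw => sm_diffAt hVo hv (hVs hw)) hgb (subset_closure hy) hz
    have h2 : ‖z - y‖ ≤ 2 := by
      have a : ‖z‖ < 1 := by simpa using hsub hz
      have b : ‖y‖ < 1 := by simpa using hsub (subset_closure hy)
      linarith [norm_sub_le z y]
    calc ut z - ut y ≤ ‖ut z - ut y‖ := le_abs_self _
      _ ≤ |R| * ‖z - y‖ := h1
      _ ≤ |R| * 2 := by gcongr
  refine opnorm_le _ ?_ ?_ (by positivity) ?_
  · intro p q
    rw [real_inner_comm _ p, inner_hess hΩ'o hvΩ hy, inner_hess hΩ'o hvΩ hy,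
      Dd_comm hΩ'o hvΩ p q hy]
  · intro p
    by_cases hp : fderiv ℝ (gradient ut) y p = 0
    · simp [hp]
    · have := hApos y hy _ hp
      rw [hAW y hy, real_inner_comm] at this
      exact this.le
  intro ξ hξ
  have hwc : ContinuousOn (fun z => Dd ξ (Dd ξ ut) z + K * ut z) (closure Ω') := by
    have h1 := (Dd_smooth hVo (Dd_smooth hVo hv ξ) ξ).continuousOn.mono hVs
    have h2 := hv.continuousOn.mono hVs
    fun_prop
  obtain ⟨z, hz, hzmax⟩ := hcpt.exists_isMaxOn ⟨y, subset_closure hy⟩ hwc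
  have hzn : z ∉ Ω' := by
    intro hz'
    refine key12 hn hΩ'o (subset_closure.trans hsub) hvΩ A hWA hAW hApos hceq hz'
      (ξ := ξ) (M := M) (K := K) (fun k => (hMk k z hz ξ hξ).trans (hMle k)) hK ?_
    exact (hzmax.on_subset subset_closure).isLocalMax (hΩ'o.mem_nhds hz')
  have hzf : z ∈ frontier Ω' := by
    rw [hΩ'o.frontier_eq]; exact ⟨hz, hzn⟩
  have h1 : Dd ξ (Dd ξ ut) y + K * ut y ≤ Dd ξ (Dd ξ ut) z + K * ut z :=
    hzmax (subset_closure hy)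
  have h2 : Dd ξ (Dd ξ ut) z ≤ S := by
    rw [← inner_hess hVo hv (hVs hz)]
    calc _ ≤ ‖fderiv ℝ (gradient ut) z ξ‖ * ‖ξ‖ := real_inner_le_norm _ _
      _ ≤ ‖fderiv ℝ (gradient ut) z‖ := by
        have := (fderiv ℝ (gradient ut) z).le_opNorm ξ
        rw [hξ] at this ⊢
        simpa using this
      _ ≤ S := le_csSup hbdd ⟨z, hzf, rfl⟩
  have h3 : K * (ut z - ut y) ≤ K * (|R| * 2) := by
    gcongr
    exact hosc z hz
  rw [real_inner_comm, inner_hess hΩ'o hvΩ hy]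
  linarith
end
end
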